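/- arXiv:1811.08946 — 3 statements merged into one kernel-verified Lean document; each statement's English description precedes it below -/
import Mathlib

section
/- Let k be a field and let T̄ = {(x,y) ∈ ℝ² : x + y ≥ 0} be the upper-triangular subposet of ℝ². Every pointwise finite-dimensional, middle exact persistence module N : T̄ → Vec_k is isomorphic to a direct sum of modules of the form k_{J ∩ T̄}, where each J ⊆ ℝ² is a block, together with interval modules k_{{p}} for points p on the anti-diagonal x + y = 0. -/
namespace PMod

variable (k : Type) [Field k]

/-- A persistence module over a preordered set `P` with values in `k`-vector spaces. -/
structure PersistenceModule (P : Type) [Preorder P] where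
  V : P → Type
  [addCommGroup : ∀ x, AddCommGroup (V x)]
  [module : ∀ x, Module k (V x)]
  map : ∀ {x y : P}, x ≤ y → (V x →ₗ[k] V y)
  map_refl : ∀ x : P, map (le_refl x) = LinearMap.id
  map_trans : ∀ {x y z : P} (hxy : x ≤ y) (hyz : y ≤ z),
      map (le_trans hxy hyz) = (map hyz).comp (map hxy)

attribute [instance] PersistenceModule.addCommGroup PersistenceModule.module

variable {k}

/-- A morphism of persistence modules. -/
structure Hom {P : Type} [Preorder P] (M N : PersistenceModule k P) where
  app : ∀ x, M.V x →ₗ[k] N.V x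
  natural : ∀ {x y : P} (h : x ≤ y), (N.map h).comp (app x) = (app y).comp (M.map h)

/-- A morphism of persistence modules is an isomorphism iff it is pointwise bijective. -/
def IsIsoHom {P : Type} [Preorder P] {M N : PersistenceModule k P} (f : Hom M N) : Prop :=
  ∀ x, Function.Bijective (f.app x)

/-- Two persistence modules are isomorphic if there is a pointwise bijective
morphism between them. -/
def Isomorphic {P : Type} [Preorder P] (M N : PersistenceModule k P) : Prop :=
  ∃ f : Hom M N, IsIsoHom f

/-- The direct sum of a family of persistence modules, taken pointwise
(`Π₀` is the finitely supported product, i.e. the direct sum). -/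
noncomputable def directSum {P : Type} [Preorder P] {ι : Type}
    (N : ι → PersistenceModule k P) : PersistenceModule k P where
  V x := Π₀ i, (N i).V x
  map {x y} h := DFinsupp.mapRange.linearMap (fun i => (N i).map h)
  map_refl x := by
    have h : (fun i => (N i).map (le_refl x)) =
        fun i => (LinearMap.id : (N i).V x →ₗ[k] (N i).V x) :=
      funext fun i => (N i).map_refl x
    rw [h]
    exact DFinsupp.mapRange.linearMap_id
  map_trans {x y z} hxy hyz := by
    have h : (fun i => (N i).map (le_trans hxy hyz)) =
        fun i => ((N i).map hyz).comp ((N i).map hxy) :=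
      funext fun i => (N i).map_trans hxy hyz
    rw [h]
    exact DFinsupp.mapRange.linearMap_comp _ _

/-- The binary direct sum of two persistence modules, taken pointwise. -/
def sum2 {P : Type} [Preorder P] (M N : PersistenceModule k P) : PersistenceModule k P where
  V x := M.V x × N.V x
  map h := (M.map h).prodMap (N.map h)
  map_refl x := by
    rw [M.map_refl, N.map_refl]
    exact LinearMap.prodMap_id
  map_trans hxy hyz := by
    rw [M.map_trans hxy hyz, N.map_trans hxy hyz]
    exact (LinearMap.prodMap_comp _ _ _ _).symm

/-- The zero persistence module predicate. -/
def IsZero {P : Type} [Preorder P] (M : PersistenceModule k P) : Prop :=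
  ∀ x, ∀ v : M.V x, v = 0

/-- A persistence module is indecomposable if it is nonzero and whenever it is
isomorphic to a direct sum of two modules, one of the summands is zero. -/
def Indecomposable {P : Type} [Preorder P] (M : PersistenceModule k P) : Prop :=
  ¬ IsZero M ∧ ∀ M' M'' : PersistenceModule k P,
    Isomorphic M (sum2 M' M'') → IsZero M' ∨ IsZero M''

variable (k)

/-- A subset of a preordered set is convex. -/
def IsConvex {P : Type} [Preorder P] (I : Set P) : Prop :=
  ∀ p q r : P, p ≤ q → q ≤ r → p ∈ I → r ∈ I → q ∈ I

open Classical in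
/-- The fibre of the interval module `k_I` at `x`: a copy of `k` if `x ∈ I`, else `0`. -/
noncomputable def kMod {P : Type} [Preorder P] (I : Set P) (x : P) : Submodule k k :=
  if x ∈ I then ⊤ else ⊥

/-- The canonical generator of the fibre of the interval module at a point of `I`. -/
noncomputable def kGen {P : Type} [Preorder P] {I : Set P} {x : P} (hx : x ∈ I) :
    kMod k I x :=
  ⟨1, by simp [kMod, hx]⟩

open Classical in
/-- The structure maps of the interval module. -/
noncomputable def intervalMap {P : Type} [Preorder P] (I : Set P) {x y : P} (_ : x ≤ y) :
    kMod k I x →ₗ[k] kMod k I y where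
  toFun m := if hy : y ∈ I then ⟨(m : k), by simp [kMod, hy]⟩ else 0
  map_add' a b := by
    by_cases hy : y ∈ I <;> simp [hy]
  map_smul' c a := by
    by_cases hy : y ∈ I <;> simp [hy]

theorem kMod_coe_eq_zero {P : Type} [Preorder P] {I : Set P} {x : P} (hx : x ∉ I)
    (m : kMod k I x) : (m : k) = 0 := by
  have hm := m.2
  simp only [kMod, if_neg hx, Submodule.mem_bot] at hm
  exact hm

/-- The interval module `k_I` of a convex subset `I ⊆ P`: one-dimensional with
identity structure maps on `I`, and zero outside of `I`. -/
noncomputable def intervalModule {P : Type} [Preorder P] (I : Set P) (hI : IsConvex I) :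
    PersistenceModule k P where
  V x := kMod k I x
  map h := intervalMap k I h
  map_refl x := by
    ext m
    by_cases hx : x ∈ I
    · simp [intervalMap, hx]
    · simp [intervalMap, hx, kMod_coe_eq_zero k hx m]
  map_trans {x y z} hxy hyz := by
    ext m
    by_cases hz : z ∈ I
    · by_cases hy : y ∈ I
      · simp [intervalMap, hz, hy]
      · have hx : x ∉ I := fun hx => hy (hI x y z hxy hyz hx hz)
        simp [intervalMap, hz, hy, kMod_coe_eq_zero k hx m]
    · by_cases hy : y ∈ I <;> simp [intervalMap, hz, hy]

/-- The constant persistence module `k_P` with value `k` everywhere. -/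
def constModule (P : Type) [Preorder P] : PersistenceModule k P where
  V _ := k
  map _ := LinearMap.id
  map_refl _ := rfl
  map_trans _ _ := rfl

variable {k}

/-- Connectedness of a subset of a preordered set: any two points are joined by
a finite zigzag of comparable points inside the subset. -/
def IsConn {P : Type} [Preorder P] (I : Set P) : Prop :=
  ∀ p ∈ I, ∀ q ∈ I, ∃ (n : ℕ) (r : ℕ → P), r 0 = p ∧ r n = q ∧ (∀ i ≤ n, r i ∈ I) ∧
    ∀ i < n, r i ≤ r (i + 1) ∨ r (i + 1) ≤ r i

/-- An interval in a poset: a nonempty convex connected subset. -/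
def IsInterval {P : Type} [Preorder P] (I : Set P) : Prop :=
  I.Nonempty ∧ IsConvex I ∧ IsConn I

/-- An ideal: a subset closed under going down. -/
def IsIdeal {P : Type} [Preorder P] (I : Set P) : Prop :=
  ∀ p q : P, p ≤ q → q ∈ I → p ∈ I

/-- A filter: a subset closed under going up. -/
def IsFilter {P : Type} [Preorder P] (I : Set P) : Prop :=
  ∀ p q : P, p ≤ q → p ∈ I → q ∈ I

/-- An interval in a totally ordered set: a nonempty convex subset. -/
def IsIntervalLin {P : Type} [Preorder P] (I : Set P) : Prop :=
  I.Nonempty ∧ IsConvex I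

theorem IsConvex.prod {S T : Type} [Preorder S] [Preorder T] {A : Set S} {B : Set T}
    (hA : IsConvex A) (hB : IsConvex B) : IsConvex (A ×ˢ B) := by
  intro p q r hpq hqr hp hr
  exact ⟨hA _ _ _ hpq.1 hqr.1 hp.1 hr.1, hB _ _ _ hpq.2 hqr.2 hp.2 hr.2⟩

theorem isConvex_univ {P : Type} [Preorder P] : IsConvex (Set.univ : Set P) :=
  fun _ _ _ _ _ _ _ => trivial

/-- A block in the product of two totally ordered sets. -/
def IsBlock {S T : Type} [LinearOrder S] [LinearOrder T] (I : Set (S × T)) : Prop :=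
  I.Nonempty ∧ (
    (∃ JS JT, IsIntervalLin JS ∧ IsIdeal JS ∧ IsIntervalLin JT ∧ IsIdeal JT ∧ I = JS ×ˢ JT) ∨
    (∃ JS JT, IsIntervalLin JS ∧ IsFilter JS ∧ IsIntervalLin JT ∧ IsFilter JT ∧ I = JS ×ˢ JT) ∨
    (∃ JS, IsIntervalLin JS ∧ I = JS ×ˢ (Set.univ : Set T)) ∨
    (∃ JT, IsIntervalLin JT ∧ I = (Set.univ : Set S) ×ˢ JT))

theorem IsBlock.isConvex {S T : Type} [LinearOrder S] [LinearOrder T] {I : Set (S × T)}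
    (h : IsBlock I) : IsConvex I := by
  obtain ⟨-, h | h | h | h⟩ := h
  · obtain ⟨JS, JT, hS, -, hT, -, rfl⟩ := h
    exact hS.2.prod hT.2
  · obtain ⟨JS, JT, hS, -, hT, -, rfl⟩ := h
    exact hS.2.prod hT.2
  · obtain ⟨JS, hS, rfl⟩ := h
    exact hS.2.prod isConvex_univ
  · obtain ⟨JT, hT, rfl⟩ := h
    exact isConvex_univ.prod hT.2

/-- Convexity is inherited by preimages in a subposet. -/
theorem IsConvex.preimage {P : Type} [Preorder P] {J : Set P} (hJ : IsConvex J)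
    (Q : Set P) : IsConvex {p : Q | (p : P) ∈ J} :=
  fun p q r hpq hqr hp hr => hJ p q r hpq hqr hp hr

/-- The restriction of a persistence module to a subposet. -/
def restrict {P : Type} [Preorder P] (M : PersistenceModule k P) (Q : Set P) :
    PersistenceModule k Q where
  V q := M.V q
  map h := M.map h
  map_refl q := M.map_refl q
  map_trans hxy hyz := M.map_trans hxy hyz

/-- Middle exactness for persistence modules over a product of two totally ordered sets:
for every rectangle `a = (x,y) ≤ b = (x,y'), c = (x',y) ≤ d = (x',y')` the sequence
`M_a → M_b ⊕ M_c → M_d` is exact at `M_b ⊕ M_c`. -/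
def MiddleExact {S T : Type} [Preorder S] [Preorder T]
    (M : PersistenceModule k (S × T)) : Prop :=
  ∀ (x x' : S) (y y' : T) (hx : x ≤ x') (hy : y ≤ y')
    (mb : M.V (x, y')) (mc : M.V (x', y)),
    M.map (show (x, y') ≤ (x', y') from ⟨hx, le_refl y'⟩) mb =
      M.map (show (x', y) ≤ (x', y') from ⟨le_refl x', hy⟩) mc →
    ∃ ma : M.V (x, y),
      M.map (show (x, y) ≤ (x, y') from ⟨le_refl x, hy⟩) ma = mb ∧
      M.map (show (x, y) ≤ (x', y) from ⟨hx, le_refl y⟩) ma = mc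


theorem IsIdeal.isConvex {P : Type} [Preorder P] {I : Set P} (h : IsIdeal I) : IsConvex I :=
  fun _ q r _ hqr _ hr => h q r hqr hr

theorem IsFilter.isConvex {P : Type} [Preorder P] {I : Set P} (h : IsFilter I) : IsConvex I :=
  fun p q _ hpq _ hp _ => h p q hpq hp


/-- Convexity of the preimage of a convex subset of `T` in a subposet of `S × T`. -/
theorem IsConvex.preimageSnd {S T : Type} [Preorder S] [Preorder T] {J : Set T}
    (hJ : IsConvex J) (Q : Set (S × T)) : IsConvex {p : ↥Q | (p : S × T).2 ∈ J} :=
  fun p q r hpq hqr hp hr =>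
    hJ _ _ _ (Subtype.coe_le_coe.mpr hpq).2 (Subtype.coe_le_coe.mpr hqr).2 hp hr

end PMod

namespace PMod

/-- The strictly upper-triangular subset of the plane. -/
def upperT : Set (ℝ × ℝ) := {p | 0 < p.1 + p.2}

/-- The upper-triangular subset of the plane. -/
def upperTbar : Set (ℝ × ℝ) := {p | 0 ≤ p.1 + p.2}

/-- Middle exactness for a persistence module over a subposet `Q ⊆ ℝ²`: for every
rectangle `a = (x,y)`, `b = (x,y')`, `c = (x',y)`, `d = (x',y')` with all corners in
`Q`, the sequence `M_a → M_b ⊕ M_c → M_d` is exact at `M_b ⊕ M_c`. -/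
def MiddleExactSub {k : Type} [Field k] (Q : Set (ℝ × ℝ))
    (M : PersistenceModule k ↥Q) : Prop :=
  ∀ (x x' y y' : ℝ) (hx : x ≤ x') (hy : y ≤ y')
    (ha : (x, y) ∈ Q) (hb : (x, y') ∈ Q) (hc : (x', y) ∈ Q) (hd : (x', y') ∈ Q),
    ∀ (mb : M.V ⟨(x, y'), hb⟩) (mc : M.V ⟨(x', y), hc⟩),
      M.map (show (⟨(x, y'), hb⟩ : ↥Q) ≤ ⟨(x', y'), hd⟩ from
        Subtype.mk_le_mk.mpr ⟨hx, le_refl y'⟩) mb =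
      M.map (show (⟨(x', y), hc⟩ : ↥Q) ≤ ⟨(x', y'), hd⟩ from
        Subtype.mk_le_mk.mpr ⟨le_refl x', hy⟩) mc →
      ∃ ma : M.V ⟨(x, y), ha⟩,
        M.map (show (⟨(x, y), ha⟩ : ↥Q) ≤ ⟨(x, y'), hb⟩ from
          Subtype.mk_le_mk.mpr ⟨le_refl x, hy⟩) ma = mb ∧
        M.map (show (⟨(x, y), ha⟩ : ↥Q) ≤ ⟨(x', y), hc⟩ from
          Subtype.mk_le_mk.mpr ⟨hx, le_refl y⟩) ma = mc

/-- Convexity of the preimage in a subposet of a convex subset of `ℝ²`. -/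
theorem IsConvex.preimageSub {J : Set (ℝ × ℝ)} (hJ : IsConvex J) (Q : Set (ℝ × ℝ)) :
    IsConvex {p : ↥Q | (p : ℝ × ℝ) ∈ J} :=
  fun p q r hpq hqr hp hr =>
    hJ _ _ _ (Subtype.coe_le_coe.mpr hpq) (Subtype.coe_le_coe.mpr hqr) hp hr

end PMod



namespace PMod

section General

variable {k : Type} [Field k] {P : Type} [Preorder P]

open Classical in
/-- Total version of the structure maps. -/
noncomputable def PersistenceModule.mv (N : PersistenceModule k P) (q r : P) :
    N.V q →ₗ[k] N.V r := if h : q ≤ r then N.map h else 0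

theorem mv_eq (N : PersistenceModule k P) {q r : P} (h : q ≤ r) : N.mv q r = N.map h := by
  simp [PersistenceModule.mv, h]

theorem mv_self (N : PersistenceModule k P) (q : P) (n : N.V q) : N.mv q q n = n := by
  rw [mv_eq N (le_refl q), N.map_refl]; rfl

theorem mv_mv (N : PersistenceModule k P) {q r s : P} (h : q ≤ r) (h' : r ≤ s) (n : N.V q) :
    N.mv r s (N.mv q r n) = N.mv q s n := by
  rw [mv_eq N h, mv_eq N h', mv_eq N (h.trans h'), N.map_trans h h']; rfl

/-- Sets cut out by affine equations each involving finitely many coordinates. -/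
def LinCl (k : Type) [Field k] {X : Type} {V : X → Type} [∀ x, AddCommGroup (V x)]
    [∀ x, Module k (V x)] (A : Set (∀ x, V x)) : Prop :=
  ∃ g : Set (((∀ x, V x) →ₗ[k] k) × k),
    (∀ γ ∈ g, γ.1 ∈ Submodule.span k
      {γ | ∃ (x : X) (f : V x →ₗ[k] k), γ = f ∘ₗ LinearMap.proj x}) ∧
    ∀ v, v ∈ A ↔ ∀ γ ∈ g, γ.1 v = γ.2

section LC
variable {X : Type} {V : X → Type} [∀ x, AddCommGroup (V x)]
  [∀ x, Module k (V x)]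

theorem LinCl.forall {ι : Sort*} {p : ι → (∀ x, V x) → Prop}
    (h : ∀ i, LinCl k {v | p i v}) : LinCl k {v | ∀ i, p i v} := by
  choose g hs hg using h
  refine ⟨⋃ i, g i, fun γ hγ => ?_, fun v => ?_⟩
  · obtain ⟨i, hi⟩ := Set.mem_iUnion.1 hγ
    exact hs i γ hi
  simp only [Set.mem_ofPred_eq, Set.mem_iUnion] at hg ⊢
  constructor
  · rintro h γ ⟨i, hi⟩
    exact (hg i v).1 (h i) γ hi
  · intro h i
    exact (hg i v).2 fun γ hγ => h γ ⟨i, hγ⟩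

theorem LinCl.and {p q : (∀ x, V x) → Prop}
    (hp : LinCl k {v | p v}) (hq : LinCl k {v | q v}) : LinCl k {v | p v ∧ q v} := by
  obtain ⟨g, hs, hg⟩ := hp
  obtain ⟨g', hs', hg'⟩ := hq
  refine ⟨g ∪ g', fun γ hγ => hγ.elim (hs γ) (hs' γ), fun v => ?_⟩
  simp only [Set.mem_ofPred_eq] at hg hg' ⊢
  rw [hg, hg']
  constructor
  · rintro ⟨h, h'⟩ γ (hγ | hγ)
    · exact h _ hγ
    · exact h' _ hγ
  · exact fun h => ⟨fun γ hγ => h γ (Or.inl hγ), fun γ hγ => h γ (Or.inr hγ)⟩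

theorem LinCl.eq {W : Type} [AddCommGroup W] [Module k W] (x y : X) (α : V x →ₗ[k] W)
    (β : V y →ₗ[k] W) : LinCl k {v : ∀ x, V x | α (v x) = β (v y)} := by
  refine ⟨Set.range fun f : Module.Dual k W =>
    ((f ∘ₗ α) ∘ₗ LinearMap.proj x - (f ∘ₗ β) ∘ₗ LinearMap.proj y, 0), ?_, fun v => ?_⟩
  · rintro _ ⟨f, rfl⟩
    exact Submodule.sub_mem _ (Submodule.subset_span ⟨x, _, rfl⟩)
      (Submodule.subset_span ⟨y, _, rfl⟩)
  simp only [Set.mem_ofPred_eq, Set.forall_mem_range, LinearMap.sub_apply, LinearMap.comp_apply,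
    LinearMap.proj_apply]
  constructor
  · intro h f
    rw [h]; simp
  · intro h
    rw [← sub_eq_zero, ← Module.forall_dual_apply_eq_zero_iff k]
    intro f
    rw [map_sub]
    exact h f

theorem LinCl.const {W : Type} [AddCommGroup W] [Module k W] (x : X) (α : V x →ₗ[k] W)
    (w : W) : LinCl k {v : ∀ x, V x | α (v x) = w} := by
  refine ⟨Set.range fun f : Module.Dual k W =>
    ((f ∘ₗ α) ∘ₗ LinearMap.proj x, f w), ?_, fun v => ?_⟩
  · rintro _ ⟨f, rfl⟩
    exact Submodule.subset_span ⟨x, _, rfl⟩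
  simp only [Set.mem_ofPred_eq, Set.forall_mem_range, LinearMap.comp_apply,
    LinearMap.proj_apply]
  constructor
  · intro h f
    rw [h]
  · intro h
    rw [← sub_eq_zero, ← Module.forall_dual_apply_eq_zero_iff k]
    intro f
    rw [map_sub, sub_eq_zero]
    exact h f

theorem lin_compact [∀ x, FiniteDimensional k (V x)] {C : Type} (A : C → Set (∀ x, V x))
    (hA : ∀ c, LinCl k (A c)) (h : ∀ F : Finset C, ∃ v, ∀ c ∈ F, v ∈ A c) :
    ∃ v, ∀ c, v ∈ A c := by
  classical
  choose g hs hg using hA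
  let I := Σ c, g c
  let F : (I →₀ k) →ₗ[k] ((∀ x, V x) →ₗ[k] k) :=
    Finsupp.linearCombination k (fun i : I => i.2.1.1)
  let G : (I →₀ k) →ₗ[k] k := Finsupp.linearCombination k (fun i : I => i.2.1.2)
  have hker : LinearMap.ker F ≤ LinearMap.ker G := by
    intro a ha
    obtain ⟨v, hv⟩ := h (a.support.image Sigma.fst)
    have h1 : F a v = G a := by
      simp only [F, G, Finsupp.linearCombination_apply, Finsupp.sum, LinearMap.sum_apply,
        LinearMap.smul_apply]
      refine Finset.sum_congr rfl fun i hi => ?_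
      rw [(hg i.1 v).1 (hv i.1 (Finset.mem_image_of_mem _ hi)) _ i.2.2]
    rw [LinearMap.mem_ker] at ha ⊢
    rw [← h1, ha, LinearMap.zero_apply]
  obtain ⟨ξ, hξ⟩ : ∃ ξ : ((∀ x, V x) →ₗ[k] k) →ₗ[k] k, ξ ∘ₗ F = G := by
    have : G ∈ LinearMap.range F.dualMap := by
      rw [LinearMap.range_dualMap_eq_dualAnnihilator_ker, Submodule.mem_dualAnnihilator]
      exact fun w hw => hker hw
    exact this
  let L : ∀ x, (V x →ₗ[k] k) →ₗ[k] k := fun x =>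
    ξ ∘ₗ (LinearMap.lcomp k k (LinearMap.proj x : (∀ x, V x) →ₗ[k] V x))
  let u : ∀ x, V x := fun x => (Module.evalEquiv k (V x)).symm (L x)
  have h2 : ∀ γ ∈ Submodule.span k
      {γ : (∀ x, V x) →ₗ[k] k | ∃ (x : X) (f : V x →ₗ[k] k), γ = f ∘ₗ LinearMap.proj x},
      ξ γ = γ u := by
    intro γ hγ
    induction hγ using Submodule.span_induction with
    | mem γ hγ =>
      obtain ⟨x, f, rfl⟩ := hγ
      have : f (u x) = L x f := Module.apply_evalEquiv_symm_apply k (V x) f (L x)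
      exact this.symm
    | zero => simp
    | add a b _ _ ha hb => rw [map_add, LinearMap.add_apply, ha, hb]
    | smul c a _ ha => rw [map_smul, LinearMap.smul_apply, ha]
  refine ⟨u, fun c => ?_⟩
  rw [hg]
  intro γ hγ
  rw [← h2 _ (hs c γ hγ)]
  have h3 := LinearMap.congr_fun hξ (Finsupp.single (⟨c, ⟨γ, hγ⟩⟩ : I) 1)
  simpa [F, G] using h3

end LC

theorem exists_min_sub {V ι : Type} [AddCommGroup V] [Module k V] [FiniteDimensional k V]
    (F : ι → Submodule k V) (h : ∃ i, F i ≠ ⊥) :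
    ∃ i, F i ≠ ⊥ ∧ ∀ j, F j ≤ F i → F j ≠ ⊥ → F j = F i := by
  obtain ⟨W, ⟨⟨i, rfl⟩, hi⟩, hmin⟩ := (wellFounded_lt (α := Submodule k V)).has_min
    {W | (∃ i, F i = W) ∧ W ≠ ⊥} (by obtain ⟨i, hi⟩ := h; exact ⟨F i, ⟨i, rfl⟩, hi⟩)
  refine ⟨i, hi, fun j hj hj' => ?_⟩
  by_contra hne
  exact hmin (F j) ⟨⟨j, rfl⟩, hj'⟩ (lt_of_le_of_ne hj hne)

/-- Functionals on the colimit over a directed set. -/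
theorem exists_functional (N : PersistenceModule k P) (D D' : Set P)
    (hdir : ∀ p ∈ D, ∀ q ∈ D, ∃ r ∈ D, p ≤ r ∧ q ≤ r)
    (hD' : D' ⊆ D)
    (hdir' : ∀ p ∈ D', ∀ q ∈ D', ∃ r ∈ D', p ≤ r ∧ q ≤ r)
    (r0 : P) (hr0 : r0 ∈ D) (v : N.V r0)
    (h0 : ∀ r ∈ D, r0 ≤ r → N.mv r0 r v ≠ 0)
    (h1 : ∀ r ∈ D, r0 ≤ r → ∀ q ∈ D', q ≤ r → ∀ n, N.mv q r n ≠ N.mv r0 r v) :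
    ∃ f : ∀ q, N.V q →ₗ[k] k, (∀ q ∈ D, ∀ q' ∈ D, q ≤ q' → ∀ n, f q' (N.mv q q' n) = f q n) ∧
      f r0 v = 1 ∧ ∀ q ∈ D', f q = 0 := by
  classical
  let G : D → Type := fun q => N.V q
  let fm : ∀ i j : D, i ≤ j → G i →ₗ[k] G j := fun i j _ => N.mv i j
  have : DirectedSystem G (fm · · ·) :=
    ⟨fun i x => mv_self N i x, fun i j l hij hjl x => mv_mv N hij hjl x⟩
  have : Nonempty D := ⟨⟨r0, hr0⟩⟩
  have : IsDirectedOrder D := ⟨fun a b => by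
    obtain ⟨r, hr, h, h'⟩ := hdir a a.2 b b.2
    exact ⟨⟨r, hr⟩, h, h'⟩⟩
  let C := Module.DirectLimit G fm
  let o : ∀ i : D, G i →ₗ[k] C := fun i => Module.DirectLimit.of k D G fm i
  have ho : ∀ (i j : D) (h : i ≤ j) x, o j (N.mv i j x) = o i x := fun i j h x =>
    Module.DirectLimit.of_f (hij := h)
  have hz : ∀ (i : D) x, o i x = 0 → ∃ j : D, i ≤ j ∧ N.mv i j x = 0 := by
    intro i x hx
    obtain ⟨j, hij, hj⟩ := Module.DirectLimit.of.zero_exact hx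
    exact ⟨j, hij, hj⟩
  let S : Submodule k C := ⨆ q : {q : D // (q : P) ∈ D'}, LinearMap.range (o q.1)
  have hS : o ⟨r0, hr0⟩ v ∉ S := by
    intro hS
    by_cases hne : Nonempty {q : D // (q : P) ∈ D'}
    · rw [Submodule.mem_iSup_of_directed] at hS
      · obtain ⟨q, n, hn⟩ := hS
        obtain ⟨r, hr, h, h'⟩ := hdir q q.1.2 r0 hr0
        have : o ⟨r, hr⟩ (N.mv q r n - N.mv r0 r v) = 0 := by
          rw [map_sub, ho q.1 ⟨r, hr⟩ h, ho ⟨r0, hr0⟩ ⟨r, hr⟩ h', hn, sub_self]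
        obtain ⟨j, hj, hj'⟩ := hz _ _ this
        rw [map_sub, mv_mv N h hj, mv_mv N h' hj, sub_eq_zero] at hj'
        exact h1 j j.2 (le_trans h' hj) q q.2 (le_trans h hj) n hj'
      · intro a b
        obtain ⟨r, hr, h, h'⟩ := hdir' a a.2 b b.2
        refine ⟨⟨⟨r, hD' hr⟩, hr⟩, ?_, ?_⟩
        · rintro _ ⟨n, rfl⟩
          exact ⟨N.mv a r n, ho a.1 ⟨r, hD' hr⟩ h n⟩
        · rintro _ ⟨n, rfl⟩
          exact ⟨N.mv b r n, ho b.1 ⟨r, hD' hr⟩ h' n⟩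
    · rw [not_nonempty_iff] at hne
      simp only [S, iSup_of_empty, Submodule.mem_bot] at hS
      obtain ⟨j, hj, hj'⟩ := hz _ _ hS
      exact h0 j j.2 hj hj'
  obtain ⟨f, hf, hSf⟩ := Submodule.exists_le_ker_of_notMem hS
  let c := f (o ⟨r0, hr0⟩ v)
  refine ⟨fun q => if h : q ∈ D then c⁻¹ • (f ∘ₗ o ⟨q, h⟩) else 0, ?_, ?_, ?_⟩
  · intro q hq q' hq' hqq n
    simp only [hq, hq', dif_pos, LinearMap.smul_apply, LinearMap.comp_apply]
    rw [ho ⟨q, hq⟩ ⟨q', hq'⟩ hqq]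
  · simp only [hr0, dif_pos, LinearMap.smul_apply, LinearMap.comp_apply]
    exact inv_mul_cancel₀ hf
  · intro q hq
    simp only [hD' hq, dif_pos]
    ext n
    have : o ⟨q, hD' hq⟩ n ∈ LinearMap.ker f :=
      hSf (Submodule.mem_iSup_of_mem (p := fun q : {q : D // (q : P) ∈ D'} =>
        LinearMap.range (o q.1)) ⟨⟨q, hD' hq⟩, hq⟩ ⟨n, rfl⟩)
    simp [LinearMap.mem_ker.1 this]

/-- Data splitting off an interval module. -/
def Splits (N : PersistenceModule k P) (B : Set P) : Prop :=
  B.Nonempty ∧ ∃ (φ : ∀ q, N.V q) (f : ∀ q, N.V q →ₗ[k] k),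
    (∀ q, q ∉ B → φ q = 0) ∧ (∀ q, q ∉ B → f q = 0) ∧
    (∀ q q', q ≤ q' → q ∈ B → N.mv q q' (φ q) = φ q') ∧
    (∀ q q', q ≤ q' → q' ∈ B → ∀ n, f q' (N.mv q q' n) = f q n) ∧
    ∀ q ∈ B, f q (φ q) = 1

theorem mkSplits (N : PersistenceModule k P) (D D' : Set P)
    (hid : ∀ p q : P, p ≤ q → q ∈ D → p ∈ D)
    (hdir : ∀ p ∈ D, ∀ q ∈ D, ∃ r ∈ D, p ≤ r ∧ q ≤ r)
    (hD' : D' ⊆ D)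
    (hid' : ∀ p q : P, p ≤ q → q ∈ D' → p ∈ D')
    (hdir' : ∀ p ∈ D', ∀ q ∈ D', ∃ r ∈ D', p ≤ r ∧ q ≤ r)
    (hne : (D \ D').Nonempty) (φ : ∀ q, N.V q)
    (hφ0 : ∀ q, q ∉ D \ D' → φ q = 0)
    (hφ : ∀ q q', q ≤ q' → q ∈ D \ D' → N.mv q q' (φ q) = φ q')
    (h0 : ∀ r ∈ D \ D', φ r ≠ 0)
    (h1 : ∀ r ∈ D \ D', ∀ q ∈ D', q ≤ r → ∀ n, N.mv q r n ≠ φ r) :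
    Splits N (D \ D') := by
  classical
  refine ⟨hne, ?_⟩
  obtain ⟨r0, hr0, hr0'⟩ := hne
  have hup : ∀ r r', r ∈ D \ D' → r ≤ r' → r' ∈ D → r' ∈ D \ D' := fun r r' h hr h' =>
    ⟨h', fun h'' => h.2 (hid' r r' hr h'')⟩
  obtain ⟨f, hf, hf1, hf0⟩ := exists_functional N D D' hdir hD' hdir' r0 hr0 (φ r0)
    (fun r hr hrr => by
      rw [hφ _ _ hrr ⟨hr0, hr0'⟩]; exact h0 r (hup _ _ ⟨hr0, hr0'⟩ hrr hr))
    (fun r hr hrr q hq hqr n => by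
      rw [hφ _ _ hrr ⟨hr0, hr0'⟩]; exact h1 r (hup _ _ ⟨hr0, hr0'⟩ hrr hr) q hq hqr n)
  refine ⟨φ, fun q => if q ∈ D \ D' then f q else 0, hφ0, fun q hq => if_neg hq, hφ, ?_, ?_⟩
  · intro q q' hqq hq' n
    beta_reduce
    rw [if_pos hq', hf q (hid _ _ hqq hq'.1) q' hq'.1 hqq]
    by_cases hq : q ∈ D \ D'
    · rw [if_pos hq]
    · rw [if_neg hq]
      have : q ∈ D' := by
        by_contra h
        exact hq ⟨hid _ _ hqq hq'.1, h⟩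
      rw [hf0 q this]
  · intro q hq
    beta_reduce
    rw [if_pos hq]
    obtain ⟨r, hr, h, h'⟩ := hdir q hq.1 r0 hr0
    rw [← hf q hq.1 r hr h, hφ _ _ h hq, ← hφ _ _ h' ⟨hr0, hr0'⟩, hf r0 hr0 r hr h', hf1]

theorem Splits.iso {N : PersistenceModule k P} {B : Set P} (h : Splits N B)
    (hind : ∀ e : ∀ q, N.V q →ₗ[k] N.V q,
      (∀ q q', q ≤ q' → ∀ n, e q' (N.mv q q' n) = N.mv q q' (e q n)) →
      (∀ q n, e q (e q n) = e q n) → (∀ q n, e q n = 0) ∨ (∀ q n, e q n = n))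
    (hB : IsConvex B) : Isomorphic N (intervalModule k B hB) := by
  classical
  obtain ⟨⟨q0, hq0⟩, φ, f, hφ0, hf0, hφ, hf, h1⟩ := h
  have he : ∀ q n, f q n • φ q = n := by
    have e1 : ∀ q q', q ≤ q' → ∀ n, f q' (N.mv q q' n) • φ q' = N.mv q q' (f q n • φ q) := by
      intro q q' hqq n
      rw [map_smul]
      by_cases hq : q ∈ B
      · rw [hφ q q' hqq hq]
        by_cases hq' : q' ∈ B
        · rw [hf q q' hqq hq']
        · rw [hφ0 q' hq', smul_zero, smul_zero]
      · rw [hφ0 q hq, map_zero, smul_zero]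
        by_cases hq' : q' ∈ B
        · rw [hf q q' hqq hq', hf0 q hq]; simp
        · rw [hφ0 q' hq']; simp
    have e2 : ∀ q n, f q (f q n • φ q) • φ q = f q n • φ q := by
      intro q n
      by_cases hq : q ∈ B
      · rw [map_smul, h1 q hq]; simp
      · rw [hφ0 q hq]; simp
    rcases hind (fun q => (f q).smulRight (φ q)) e1 e2 with h | h
    · exfalso
      have := congrArg (f q0) (h q0 (φ q0))
      simp [h1 q0 hq0] at this
    · exact h
  have hmem : ∀ q n, f q n ∈ kMod k B q := by
    intro q n
    by_cases hq : q ∈ B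
    · simp [kMod, hq]
    · rw [hf0 q hq]; simp
  refine ⟨⟨fun q => (f q).codRestrict (kMod k B q) (hmem q), ?_⟩, ?_⟩
  · intro q q' hqq
    refine LinearMap.ext fun n => ?_
    have key : ((intervalMap k B hqq ((f q).codRestrict (kMod k B q) (hmem q) n) :
        kMod k B q') : k) = f q' (N.mv q q' n) := by
      by_cases hq' : q' ∈ B
      · simp [intervalMap, hq', hf q q' hqq hq']
      · simp [intervalMap, hq', hf0 q' hq']
    rw [mv_eq N hqq] at key
    exact Subtype.ext key
  · intro q
    constructor
    · intro a b hab
      have : f q a = f q b := congrArg Subtype.val hab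
      rw [← he q a, ← he q b, this]
    · rintro ⟨a, ha⟩
      by_cases hq : q ∈ B
      · refine ⟨a • φ q, Subtype.ext ?_⟩
        change f q (a • φ q) = a
        simp [h1 q hq]
      · refine ⟨0, Subtype.ext ?_⟩
        have := kMod_coe_eq_zero k hq ⟨a, ha⟩
        change f q 0 = a
        rw [map_zero]; exact this.symm

end General

end PMod


namespace PMod

section Plane

variable {k : Type} [Field k]

/-- Points of the upper triangle. -/
def pt (x y : ℝ) (h : 0 ≤ x + y) : ↥upperTbar := ⟨(x, y), h⟩

theorem pt_le {x y x' y' : ℝ} {h : 0 ≤ x + y} {h' : 0 ≤ x' + y'} (hx : x ≤ x') (hy : y ≤ y') :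
    pt x y h ≤ pt x' y' h' := Subtype.mk_le_mk.mpr ⟨hx, hy⟩

/-- Points of the anti-diagonal. -/
abbrev dg (t : ℝ) : ↥upperTbar := pt (-t) t (by simp)

theorem dg_le {t : ℝ} {r : ↥upperTbar} : dg t ≤ r ↔ -t ≤ r.1.1 ∧ t ≤ r.1.2 := Iff.rfl

theorem le_iff {q r : ↥upperTbar} : q ≤ r ↔ q.1.1 ≤ r.1.1 ∧ q.1.2 ≤ r.1.2 := Iff.rfl

theorem me {N : PersistenceModule k ↥upperTbar} (hme : MiddleExactSub upperTbar N)
    {x x' y y' : ℝ} (hx : x ≤ x') (hy : y ≤ y') (ha : 0 ≤ x + y) (hb : 0 ≤ x + y')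
    (hc : 0 ≤ x' + y) (hd : 0 ≤ x' + y') (mb : N.V (pt x y' hb)) (mc : N.V (pt x' y hc))
    (h : N.mv (pt x y' hb) (pt x' y' hd) mb = N.mv (pt x' y hc) (pt x' y' hd) mc) :
    ∃ ma : N.V (pt x y ha), N.mv (pt x y ha) (pt x y' hb) ma = mb ∧
      N.mv (pt x y ha) (pt x' y hc) ma = mc := by
  rw [mv_eq N (pt_le hx le_rfl), mv_eq N (pt_le le_rfl hy)] at h
  rw [mv_eq N (pt_le hx le_rfl), mv_eq N (pt_le le_rfl hy)]
  exact hme x x' y y' hx hy ha hb hc hd mb mc h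

/-- Agreement of two vectors over points of the anti-diagonal. -/
def Agr (N : PersistenceModule k ↥upperTbar) (a b : ℝ) (na : N.V (dg a)) (nb : N.V (dg b)) :
    Prop :=
  ∀ r, dg a ≤ r → dg b ≤ r → N.mv (dg a) r na = N.mv (dg b) r nb

variable {N : PersistenceModule k ↥upperTbar}

theorem Agr.symm {a b : ℝ} {na : N.V (dg a)} {nb : N.V (dg b)} (h : Agr N a b na nb) :
    Agr N b a nb na := fun r h1 h2 => (h r h2 h1).symm

theorem Agr.trans {a b c : ℝ} {na : N.V (dg a)} {nb : N.V (dg b)} {nc : N.V (dg c)}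
    (h : Agr N a b na nb) (h' : Agr N b c nb nc) (hab : a ≤ b) (hbc : b ≤ c) :
    Agr N a c na nc := by
  intro r h1 h2
  have hb : dg b ≤ r := by
    rw [dg_le] at *
    exact ⟨by linarith [h1.1], by linarith [h2.2]⟩
  rw [h r h1 hb, h' r hb h2]

theorem agr_of {a b : ℝ} (hab : a ≤ b) {na : N.V (dg a)} {nb : N.V (dg b)}
    (h : N.mv (dg a) (pt (-a) b (by linarith)) na = N.mv (dg b) (pt (-a) b (by linarith)) nb) :
    Agr N a b na nb := by
  intro r h1 h2
  have hr : pt (-a) b (by linarith) ≤ r := by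
    rw [dg_le] at h1 h2
    exact ⟨h1.1, h2.2⟩
  have ha : dg a ≤ pt (-a) b (by linarith) := pt_le le_rfl hab
  have hb : dg b ≤ pt (-a) b (by linarith) := pt_le (by linarith) le_rfl
  rw [← mv_mv N ha hr, ← mv_mv N hb hr, h]

theorem agr_self {a : ℝ} (na : N.V (dg a)) : Agr N a a na na := fun _ _ _ => rfl

theorem zig_insert (hme : MiddleExactSub upperTbar N) (H : Finset ℝ) (v : ∀ t, N.V (dg t))
    (hv : ∀ a ∈ H, ∀ b ∈ H, Agr N a b (v a) (v b)) (t : ℝ) (ht : t ∉ H)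
    (hl : ∃ l ∈ H, l < t) (hu : ∃ u ∈ H, t < u) :
    ∃ v' : ∀ t, N.V (dg t), (∀ s, s ≠ t → v' s = v s) ∧
      ∀ a ∈ insert t H, ∀ b ∈ insert t H, Agr N a b (v' a) (v' b) := by
  classical
  obtain ⟨l, hlH, hlmax⟩ := (H.filter (· < t)).exists_max_image id (by
    obtain ⟨l, h, h'⟩ := hl
    exact ⟨l, by simp [h, h']⟩)
  obtain ⟨u, huH, humin⟩ := (H.filter (t < ·)).exists_min_image id (by
    obtain ⟨l, h, h'⟩ := hu
    exact ⟨l, by simp [h, h']⟩)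
  simp only [Finset.mem_filter, id] at hlH huH hlmax humin
  obtain ⟨hlH, hlt⟩ := hlH
  obtain ⟨huH, hut⟩ := huH
  have h1 : dg u ≤ pt (-t) u (by linarith) := pt_le (by linarith) le_rfl
  have h2 : dg l ≤ pt (-l) t (by linarith) := pt_le le_rfl (by linarith)
  obtain ⟨ma, hb, hc⟩ := me hme (x := -t) (x' := -l) (y := t) (y' := u) (by linarith)
    (by linarith) (by linarith) (by linarith) (by linarith) (by linarith)
    (N.mv (dg u) _ (v u)) (N.mv (dg l) _ (v l)) (by
      rw [mv_mv N h1 (pt_le (by linarith) le_rfl), mv_mv N h2 (pt_le le_rfl (by linarith))]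
      exact hv u huH l hlH _ (pt_le (by linarith) le_rfl) (pt_le le_rfl (by linarith)))
  have hL : Agr N l t (v l) ma := agr_of hlt.le hc.symm
  have hU : Agr N t u ma (v u) := agr_of hut.le hb
  have hall : ∀ a ∈ H, Agr N t a ma (v a) := by
    intro a ha
    rcases lt_trichotomy a t with h | h | h
    · exact ((hv a ha l hlH).trans hL (hlmax a ⟨ha, h⟩) hlt.le).symm
    · exact absurd (h ▸ ha) ht
    · exact hU.trans (hv u huH a ha) hut.le (humin a ⟨ha, h⟩)
  have hne : ∀ a ∈ H, a ≠ t := fun a ha h => ht (h ▸ ha)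
  refine ⟨Function.update v t ma, fun s hs => Function.update_of_ne hs _ _, ?_⟩
  intro a ha b hb
  rcases Finset.mem_insert.1 ha with rfl | ha'
  · rcases Finset.mem_insert.1 hb with rfl | hb'
    · exact agr_self _
    · rw [Function.update_self, Function.update_of_ne (hne b hb')]
      exact hall b hb'
  · rcases Finset.mem_insert.1 hb with rfl | hb'
    · rw [Function.update_self, Function.update_of_ne (hne a ha')]
      exact (hall a ha').symm
    · rw [Function.update_of_ne (hne a ha'), Function.update_of_ne (hne b hb')]
      exact hv a ha' b hb'

theorem zig_extend (hme : MiddleExactSub upperTbar N) (H : Finset ℝ) (v : ∀ t, N.V (dg t))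
    (hv : ∀ a ∈ H, ∀ b ∈ H, Agr N a b (v a) (v b)) (l u : ℝ) (hl : l ∈ H) (hu : u ∈ H)
    (G : Finset ℝ) (hG : ∀ t ∈ G, l < t ∧ t < u) :
    ∃ v' : ∀ t, N.V (dg t), (∀ s ∈ H, v' s = v s) ∧
      ∀ a ∈ G ∪ H, ∀ b ∈ G ∪ H, Agr N a b (v' a) (v' b) := by
  classical
  induction G using Finset.induction_on with
  | empty => exact ⟨v, fun _ _ => rfl, by simpa using hv⟩
  | insert t G _ ih =>
    obtain ⟨v', h1, h2⟩ := ih fun s hs => hG s (Finset.mem_insert_of_mem hs)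
    rw [Finset.insert_union]
    by_cases htH : t ∈ G ∪ H
    · rw [Finset.insert_eq_of_mem htH]
      exact ⟨v', h1, h2⟩
    · obtain ⟨h3, h4⟩ := hG t (Finset.mem_insert_self _ _)
      obtain ⟨v'', h5, h6⟩ := zig_insert hme (G ∪ H) v' h2 t htH
        ⟨l, Finset.mem_union_right _ hl, h3⟩ ⟨u, Finset.mem_union_right _ hu, h4⟩
      refine ⟨v'', fun s hs => ?_, h6⟩
      rw [h5 s fun h => htH (Finset.mem_union_right _ (h ▸ hs)), h1 s hs]

theorem step1_family (hfd : ∀ p, FiniteDimensional k (N.V p)) (hme : MiddleExactSub upperTbar N)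
    (τ : Set ℝ) (c : ℝ) (m : N.V (dg c)) (hc : c ∈ τ) (l u : ℝ) (hl : l ∉ τ) (hu : u ∉ τ)
    (hlu : ∀ t ∈ τ, l < t ∧ t < u) (hm : ∀ t, t ∉ τ → Agr N c t m 0) :
    ∃ v : ∀ t, N.V (dg t), v c = m ∧ (∀ t, t ∉ τ → v t = 0) ∧
      ∀ a b, Agr N a b (v a) (v b) := by
  classical
  obtain ⟨v, hv⟩ := lin_compact (k := k) (V := fun t => N.V (dg t)) (C := ℝ × ℝ)
    (fun ab => {v | v c = m ∧ (∀ _ : ab.1 ∉ τ, v ab.1 = 0) ∧ ∀ r, ∀ _ : dg ab.1 ≤ r,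
      ∀ _ : dg ab.2 ≤ r, N.mv (dg ab.1) r (v ab.1) = N.mv (dg ab.2) r (v ab.2)}) (fun ab => by
      have e1 : LinCl k {v : ∀ t, N.V (dg t) | v c = m} :=
        LinCl.const (V := fun t => N.V (dg t)) c LinearMap.id m
      have e2 : LinCl k {v : ∀ t, N.V (dg t) | v ab.1 = 0} :=
        LinCl.const (V := fun t => N.V (dg t)) ab.1 LinearMap.id 0
      refine LinCl.and e1 (LinCl.and ?_ ?_)
      · exact LinCl.forall fun _ => e2
      · exact LinCl.forall fun r => LinCl.forall fun _ => LinCl.forall fun _ =>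
          LinCl.eq _ _ _ _) (fun F => by
      let G := F.image Prod.fst ∪ F.image Prod.snd
      let H := insert c (insert l (insert u (G.filter (· ∉ τ))))
      have hH : ∀ a ∈ H, a = c ∨ a ∉ τ := by
        intro a ha
        simp only [H, Finset.mem_insert, Finset.mem_filter] at ha
        rcases ha with h | rfl | rfl | h
        · exact Or.inl h
        · exact Or.inr hl
        · exact Or.inr hu
        · exact Or.inr h.2
      let v0 : ∀ t, N.V (dg t) := Function.update (fun _ => 0) c m
      have hv0 : v0 c = m := Function.update_self _ _ _
      have hv0' : ∀ t, t ∉ τ → v0 t = 0 := fun t ht =>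
        Function.update_of_ne (a := t) (a' := c) (by rintro rfl; exact ht hc) _ _
      obtain ⟨v, h1, h2⟩ := zig_extend hme H v0 (by
        intro a ha b hb
        rcases hH a ha with hac | ha'
        · rcases hH b hb with hbc | hb'
          · rw [hac, hbc]; exact agr_self _
          · rw [hac, hv0, hv0' b hb']; exact hm b hb'
        · rcases hH b hb with hbc | hb'
          · rw [hbc, hv0, hv0' a ha']; exact (hm a ha').symm
          · rw [hv0' a ha', hv0' b hb']
            intro r _ _
            simp) l u (by simp [H]) (by simp [H]) (G.filter (· ∈ τ)) (fun t ht =>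
              hlu t (Finset.mem_filter.1 ht).2)
      have hsub : ∀ t ∈ G, t ∈ G.filter (· ∈ τ) ∪ H := by
        intro t ht
        by_cases h : t ∈ τ
        · exact Finset.mem_union_left _ (Finset.mem_filter.2 ⟨ht, h⟩)
        · refine Finset.mem_union_right _ ?_
          simp only [H, Finset.mem_insert, Finset.mem_filter]
          exact Or.inr (Or.inr (Or.inr ⟨ht, h⟩))
      have hG1 : ∀ ab ∈ F, ab.1 ∈ G := fun ab h =>
        Finset.mem_union_left _ (Finset.mem_image_of_mem _ h)
      have hG2 : ∀ ab ∈ F, ab.2 ∈ G := fun ab h =>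
        Finset.mem_union_right _ (Finset.mem_image_of_mem _ h)
      refine ⟨v, fun ab hab => ⟨?_, ?_, ?_⟩⟩
      · rw [h1 c (by simp [H]), hv0]
      · intro h
        rw [h1 _ ?_, hv0' _ h]
        simp only [H, Finset.mem_insert, Finset.mem_filter]
        exact Or.inr (Or.inr (Or.inr ⟨hG1 _ hab, h⟩))
      · exact fun r hr hr' => h2 _ (hsub _ (hG1 _ hab)) _ (hsub _ (hG2 _ hab)) r hr hr')
  exact ⟨v, (hv (0, 0)).1, fun t ht => (hv (t, t)).2.1 ht, fun a b => (hv (a, b)).2.2⟩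

/-- The preimage of a subset of the plane. -/
def pre (J : Set (ℝ × ℝ)) : Set ↥upperTbar := {p : ↥upperTbar | (p : ℝ × ℝ) ∈ J}

/-- The module has a block summand. -/
def HasBlock (N : PersistenceModule k ↥upperTbar) : Prop :=
  ∃ J : Set (ℝ × ℝ), IsBlock J ∧ Splits N (pre J)

theorem step1 (hfd : ∀ p, FiniteDimensional k (N.V p)) (hme : MiddleExactSub upperTbar N)
    {x y x' y' : ℝ} (hx : x ≤ x') (hy : y ≤ y') (h : 0 ≤ x + y) (m : N.V (pt x y h))
    (hm : m ≠ 0) (h1 : N.mv (pt x y h) (pt x' y (by linarith)) m = 0)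
    (h2 : N.mv (pt x y h) (pt x y' (by linarith)) m = 0) : HasBlock N := by
  classical
  -- move to the anti-diagonal
  obtain ⟨c, hcdef⟩ : ∃ c, c = y := ⟨y, rfl⟩
  obtain ⟨m0, hm0, hm0x, hm0y⟩ : ∃ m0 : N.V (dg y), m0 ≠ 0 ∧
      N.mv (dg y) (pt x' y (by linarith)) m0 = 0 ∧ N.mv (dg y) (pt (-y) y' (by linarith)) m0 = 0 := by
    obtain ⟨ma, hb, hc⟩ := me hme (x := -y) (x' := x) (y := y) (y' := y') (by linarith) hy
      (by linarith) (by linarith) (by linarith) (by linarith) 0 m (by rw [h2, map_zero])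
    refine ⟨ma, ?_, ?_, hb⟩
    · rintro rfl
      exact hm (by rw [← hc, map_zero])
    · rw [← hc, mv_mv N (pt_le (by linarith) le_rfl) (pt_le hx le_rfl)] at h1
      exact h1
  have hx' : -y ≤ x' := by linarith
  clear h1 h2 hm m
  subst hcdef
  let A : ℝ → Submodule k (N.V (dg c)) := fun s =>
    ⨆ h : -c ≤ s, LinearMap.ker (N.mv (dg c) (pt s c (by linarith)))
  let B : ℝ → Submodule k (N.V (dg c)) := fun t =>
    ⨆ h : c ≤ t, LinearMap.ker (N.mv (dg c) (pt (-c) t (by linarith)))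
  have hA : ∀ s (h : -c ≤ s) n, n ∈ A s ↔ N.mv (dg c) (pt s c (by linarith)) n = 0 := by
    intro s h n
    simp [A, h]
  have hB : ∀ t (h : c ≤ t) n, n ∈ B t ↔ N.mv (dg c) (pt (-c) t (by linarith)) n = 0 := by
    intro t h n
    simp [B, h]
  have hA0 : ∀ s, s ≤ -c → A s = ⊥ := by
    intro s hs
    rcases hs.lt_or_eq with hs | rfl
    · simp [A, not_le.2 hs]
    · rw [eq_bot_iff]
      intro n hn
      rw [hA _ le_rfl] at hn
      rw [Submodule.mem_bot, ← mv_self N (dg c) n]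
      exact hn
  have hB0 : ∀ t, t ≤ c → B t = ⊥ := by
    intro s hs
    rcases hs.lt_or_eq with hs | rfl
    · simp [B, not_le.2 hs]
    · rw [eq_bot_iff]
      intro n hn
      rw [hB _ le_rfl] at hn
      rw [Submodule.mem_bot, ← mv_self N (dg _) n]
      exact hn
  have hAm : ∀ s s', s ≤ s' → A s ≤ A s' := by
    intro s s' hs
    rcases le_total s (-c) with h | h
    · rw [hA0 s h]; exact bot_le
    · intro n hn
      rw [hA s h] at hn
      rw [hA s' (h.trans hs), ← mv_mv N (pt_le h le_rfl) (pt_le hs le_rfl)]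
      exact (congrArg _ hn).trans (map_zero _)
  have hBm : ∀ s s', s ≤ s' → B s ≤ B s' := by
    intro s s' hs
    rcases le_total s c with h | h
    · rw [hB0 s h]; exact bot_le
    · intro n hn
      rw [hB s h] at hn
      rw [hB s' (h.trans hs), ← mv_mv N (pt_le le_rfl h) (pt_le le_rfl hs)]
      exact (congrArg _ hn).trans (map_zero _)
  have := hfd (dg c)
  obtain ⟨⟨s0, t0⟩, hne, hmin⟩ := exists_min_sub (fun st : ℝ × ℝ => A st.1 ⊓ B st.2)
    ⟨(x', y'), fun hbot => hm0 (by
      have : m0 ∈ A x' ⊓ B y' := ⟨(hA _ hx' _).2 hm0x, (hB _ hy _).2 hm0y⟩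
      rw [hbot] at this
      exact (Submodule.mem_bot k).1 this)⟩
  dsimp only at hne hmin
  obtain ⟨m, ⟨hmA, hmB⟩, hm⟩ := Submodule.exists_mem_ne_zero_of_ne_bot hne
  let JS : Set ℝ := {s | m ∉ A s}
  let JT : Set ℝ := {t | m ∉ B t}
  have hJS : ∀ s, s ≤ -c → s ∈ JS := by
    intro s hs h
    rw [hA0 s hs] at h
    exact hm h
  have hJT : ∀ s, s ≤ c → s ∈ JT := by
    intro s hs h
    rw [hB0 s hs] at h
    exact hm h
  have hSi : IsIdeal JS := fun p q hpq hq h => hq (hAm p q hpq h)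
  have hTi : IsIdeal JT := fun p q hpq hq h => hq (hBm p q hpq h)
  have hs0 : ∀ s ∈ JS, s < s0 := fun s hs => by
    by_contra hc
    exact hs (hAm s0 s (not_lt.1 hc) hmA)
  have ht0 : ∀ s ∈ JT, s < t0 := fun s hs => by
    by_contra hc
    exact hs (hBm t0 s (not_lt.1 hc) hmB)
  have hbot : ∀ s ∈ JS, A s ⊓ B t0 = ⊥ := by
    intro s hs
    by_contra hne'
    have := hmin (s, t0) (inf_le_inf_right _ (hAm s s0 (hs0 s hs).le)) hne'
    dsimp only at this
    have h3 : m ∈ A s ⊓ B t0 := by rw [this]; exact ⟨hmA, hmB⟩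
    exact hs h3.1
  -- survival in the open quadrant
  have hsurv : ∀ s ∈ JS, ∀ t ∈ JT, ∀ (h1 : -c ≤ s) (h2 : c ≤ t),
      N.mv (dg c) (pt s t (by linarith)) m ≠ 0 := by
    intro s hs t ht h1 h2 h0
    obtain ⟨ma, hb, hc⟩ := me hme (x := -c) (x' := s) (y := c) (y' := t) h1 h2
      (by linarith) (by linarith) (by linarith) (by linarith) (N.mv (dg c) _ m) 0 (by
        rw [mv_mv N (pt_le le_rfl h2) (pt_le h1 le_rfl), map_zero]; exact h0)
    have hmaA : ma ∈ A s := (hA s h1 _).2 hc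
    have htt := (ht0 t ht).le
    have hmaB : ma ∈ B t0 := by
      have hct : dg c ≤ pt (-c) t (by linarith) := pt_le le_rfl h2
      rw [hB t0 (h2.trans htt), ← mv_mv N hct (pt_le le_rfl htt)]
      have h4 := (hB t0 (h2.trans htt) m).1 hmB
      rw [← mv_mv N hct (pt_le le_rfl htt)] at h4
      rw [← h4]
      exact congrArg _ hb
    have hz : ma ∈ A s ⊓ B t0 := ⟨hmaA, hmaB⟩
    rw [hbot s hs, Submodule.mem_bot] at hz
    apply ht
    rw [hB t h2, ← hb, hz, map_zero]
  let τ : Set ℝ := {t | -t ∈ JS ∧ t ∈ JT}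
  have hs0' : s0 ∉ JS := fun h => lt_irrefl _ (hs0 _ h)
  have ht0' : t0 ∉ JT := fun h => lt_irrefl _ (ht0 _ h)
  obtain ⟨v, hvc, hv0, hv⟩ := step1_family hfd hme τ c m ⟨hJS _ le_rfl, hJT _ le_rfl⟩ (-s0) t0
    (fun h => hs0' (by simpa using h.1)) (fun h => ht0' h.2)
    (fun t ht => ⟨by linarith [hs0 _ ht.1], ht0 _ ht.2⟩) (by
      intro t ht
      rcases le_total c t with h | h
      · have h3 : t ∉ JT := fun h3 => ht ⟨hJS _ (by linarith), h3⟩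
        have h4 : m ∈ B t := not_not.1 h3
        refine agr_of h ?_
        rw [map_zero]
        exact (hB t h m).1 h4
      · have h3 : -t ∉ JS := fun h3 => ht ⟨h3, hJT _ h⟩
        have h4 : m ∈ A (-t) := not_not.1 h3
        refine (agr_of h ?_).symm
        rw [map_zero]
        exact ((hA (-t) (by linarith) m).1 h4).symm)
  have hdq : ∀ q : ↥upperTbar, dg q.1.2 ≤ q := fun q => by
    have : 0 ≤ q.1.1 + q.1.2 := q.2
    exact ⟨by change -q.1.2 ≤ q.1.1; linarith, le_rfl⟩
  have hdq1 : ∀ q : ↥upperTbar, dg (-q.1.1) ≤ q := fun q => by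
    have : 0 ≤ q.1.1 + q.1.2 := q.2
    exact ⟨by change - -q.1.1 ≤ q.1.1; linarith, by change -q.1.1 ≤ q.1.2; linarith⟩
  let φ : ∀ q, N.V q := fun q => N.mv (dg q.1.2) q (v q.1.2)
  have hφ : ∀ q q', q ≤ q' → N.mv q q' (φ q) = φ q' := by
    intro q q' hq
    simp only [φ]
    rw [mv_mv N (hdq q) hq]
    exact hv _ _ q' ((hdq q).trans hq) (hdq q')
  have hφd : ∀ t q, dg t ≤ q → φ q = N.mv (dg t) q (v t) := fun t q h =>
    hv _ _ q (hdq q) h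
  refine ⟨JS ×ˢ JT, ⟨⟨(-c, c), hJS _ le_rfl, hJT _ le_rfl⟩, Or.inl ⟨JS, JT,
    ⟨⟨-c, hJS _ le_rfl⟩, hSi.isConvex⟩, hSi, ⟨⟨c, hJT _ le_rfl⟩, hTi.isConvex⟩, hTi, rfl⟩⟩, ?_⟩
  have key := mkSplits N (pre (JS ×ˢ JT)) ∅ (fun p q hpq hq =>
      ⟨hSi _ _ hpq.1 hq.1, hTi _ _ hpq.2 hq.2⟩)
    (by
      intro p hp q hq
      have hp2 : 0 ≤ p.1.1 + p.1.2 := p.2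
      refine ⟨pt (max p.1.1 q.1.1) (max p.1.2 q.1.2) ?_, ⟨?_, ?_⟩, ⟨le_max_left _ _, le_max_left _ _⟩,
        ⟨le_max_right _ _, le_max_right _ _⟩⟩
      · linarith [le_max_left p.1.1 q.1.1, le_max_left p.1.2 q.1.2]
      · change max p.1.1 q.1.1 ∈ JS
        rcases max_choice p.1.1 q.1.1 with h | h <;> rw [h]
        exacts [hp.1, hq.1]
      · change max p.1.2 q.1.2 ∈ JT
        rcases max_choice p.1.2 q.1.2 with h | h <;> rw [h]
        exacts [hp.2, hq.2])
    (Set.empty_subset _) (fun _ _ _ h => h.elim) (fun _ h => h.elim)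
    ⟨dg c, ⟨hJS _ le_rfl, hJT _ le_rfl⟩, fun h => h⟩ φ (by
      intro q hq
      by_cases h3 : q.1.2 ∈ JT
      · have h4 : q.1.1 ∉ JS := fun h4 => hq ⟨⟨h4, h3⟩, fun h => h⟩
        rw [hφd _ q (hdq1 q), hv0, map_zero]
        intro h5
        exact h4 (by simpa using h5.1)
      · simp only [φ]
        rw [hv0 _ fun h => h3 h.2, map_zero])
    (fun q q' h _ => hφ q q' h) (by
      intro q hq h0
      have hq2 : 0 ≤ q.1.1 + q.1.2 := q.2
      have hqm : q ≤ pt (max q.1.1 (-c)) (max q.1.2 c)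
        (by linarith [le_max_left q.1.1 (-c), le_max_left q.1.2 c]) :=
        ⟨le_max_left _ _, le_max_left _ _⟩
      refine hsurv (max q.1.1 (-c)) ?_ (max q.1.2 c) ?_ (le_max_right _ _) (le_max_right _ _) ?_
      · rcases max_choice q.1.1 (-c) with h | h <;> rw [h]
        exacts [hq.1.1, hJS _ le_rfl]
      · rcases max_choice q.1.2 c with h | h <;> rw [h]
        exacts [hq.1.2, hJT _ le_rfl]
      · have h5 := hφ _ _ hqm
        rw [h0, map_zero, hφd c _ (pt_le (le_max_right _ _) (le_max_right _ _)), hvc] at h5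
        exact h5.symm)
    (fun _ _ _ h => h.elim)
  rw [Set.sdiff_empty] at key
  exact key

end Plane

end PMod


namespace PMod

section Plane2

variable {k : Type} [Field k] {N : PersistenceModule k ↥upperTbar}

/-- No nonzero vector dies in both directions. -/
def LeftEx (N : PersistenceModule k ↥upperTbar) : Prop :=
  ∀ (a b c : ↥upperTbar), b.1.1 = a.1.1 → a.1.2 ≤ b.1.2 → c.1.2 = a.1.2 → a.1.1 ≤ c.1.1 →
    ∀ m : N.V a, N.mv a b m = 0 → N.mv a c m = 0 → m = 0

theorem me' (hme : MiddleExactSub upperTbar N) (a b c d : ↥upperTbar) (h1 : b.1.1 = a.1.1)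
    (h2 : c.1.2 = a.1.2) (h3 : d.1.1 = c.1.1) (h4 : d.1.2 = b.1.2) (h5 : a.1.1 ≤ c.1.1)
    (h6 : a.1.2 ≤ b.1.2) (mb : N.V b) (mc : N.V c) (h : N.mv b d mb = N.mv c d mc) :
    ∃ ma : N.V a, N.mv a b ma = mb ∧ N.mv a c ma = mc := by
  obtain ⟨⟨a1, a2⟩, ha⟩ := a
  obtain ⟨⟨b1, b2⟩, hb⟩ := b
  obtain ⟨⟨c1, c2⟩, hc⟩ := c
  obtain ⟨⟨d1, d2⟩, hd⟩ := d
  dsimp only at h1 h2 h3 h4 h5 h6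
  subst h1 h2 h3 h4
  exact me hme h5 h6 ha hb hc hd mb mc h

theorem step2_family (hfd : ∀ p, FiniteDimensional k (N.V p)) (hme : MiddleExactSub upperTbar N)
    (hle : LeftEx N) {x y s0 : ℝ} (h : 0 ≤ x + y) (m : N.V (pt x y h)) (hs0 : x ≤ s0)
    (hm0 : N.mv (pt x y h) (pt s0 y (by linarith)) m = 0)
    (J : Set ℝ) (hxJ : x ∈ J) (hJs0 : ∀ s ∈ J, s < s0)
    (hJ : ∀ s ∈ J, s ≤ x → ∃ (t : ℝ) (ht : y ≤ t) (hst : 0 ≤ s + t) (n : N.V (pt s t hst)),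
      N.mv _ (pt x t (by linarith)) n = N.mv (pt x y h) (pt x t (by linarith)) m) :
    ∃ v : ∀ q, N.V q, v (pt x y h) = m ∧
      (∀ (q : ↥upperTbar) (r : ↥upperTbar), q.1.1 ∈ J → r.1.2 = q.1.2 → r.1.1 = s0 →
        N.mv q r (v q) = 0) ∧
      ∀ q q', q ≤ q' → q.1.1 ∈ J → q'.1.1 ∈ J → N.mv q q' (v q) = v q' := by
  classical
  obtain ⟨v, hv⟩ := lin_compact (k := k) (V := fun t => N.V t) (C := ↥upperTbar × ↥upperTbar)
    (fun ab => {v | v (pt x y h) = m ∧ (∀ (r : ↥upperTbar) (_ : ab.1.1.1 ∈ J)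
      (_ : r.1.2 = ab.1.1.2) (_ : r.1.1 = s0), N.mv ab.1 r (v ab.1) = 0) ∧
      ∀ (_ : ab.1 ≤ ab.2) (_ : ab.1.1.1 ∈ J) (_ : ab.2.1.1 ∈ J),
        N.mv ab.1 ab.2 (v ab.1) = v ab.2}) (fun ab => by
      have e1 : LinCl k {v : ∀ t, N.V t | v (pt x y h) = m} :=
        LinCl.const (V := fun t => N.V t) _ LinearMap.id m
      have e2 : LinCl k {v : ∀ t, N.V t | N.mv ab.1 ab.2 (v ab.1) = v ab.2} :=
        LinCl.eq (V := fun t => N.V t) ab.1 ab.2 (N.mv ab.1 ab.2) LinearMap.id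
      refine LinCl.and e1 (LinCl.and ?_ ?_)
      · exact LinCl.forall fun r => LinCl.forall fun _ => LinCl.forall fun _ =>
          LinCl.forall fun _ => LinCl.const (V := fun t => N.V t) _ _ _
      · exact LinCl.forall fun r => LinCl.forall fun _ => LinCl.forall fun _ => e2) (fun F => by
      let G := F.image Prod.fst ∪ F.image Prod.snd
      have hG1 : ∀ ab ∈ F, ab.1 ∈ G := fun ab h =>
        Finset.mem_union_left _ (Finset.mem_image_of_mem _ h)
      have hG2 : ∀ ab ∈ F, ab.2 ∈ G := fun ab h =>
        Finset.mem_union_right _ (Finset.mem_image_of_mem _ h)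
      obtain ⟨s, hsJ, hsx, hsG⟩ : ∃ s ∈ J, s ≤ x ∧ ∀ q ∈ G, q.1.1 ∈ J → s ≤ q.1.1 := by
        obtain ⟨s, hs, hmin⟩ := (insert x ((G.image fun q => q.1.1).filter (· ∈ J))).exists_min_image
          id ⟨x, Finset.mem_insert_self _ _⟩
        refine ⟨s, ?_, hmin x (Finset.mem_insert_self _ _), fun q hq hqJ => hmin q.1.1 ?_⟩
        · rcases Finset.mem_insert.1 hs with rfl | hs
          · exact hxJ
          · exact (Finset.mem_filter.1 hs).2
        · exact Finset.mem_insert_of_mem (Finset.mem_filter.2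
            ⟨Finset.mem_image_of_mem (fun q : ↥upperTbar => q.1.1) hq, hqJ⟩)
      obtain ⟨t1, ht1, hst1, n1, hn1⟩ := hJ s hsJ hsx
      obtain ⟨t, htt1, htG⟩ : ∃ t, t1 ≤ t ∧ ∀ q ∈ G, q.1.2 ≤ t := by
        obtain ⟨t, ht⟩ := (insert t1 (G.image fun q => q.1.2)).exists_le
        exact ⟨t, ht t1 (Finset.mem_insert_self _ _), fun q hq => ht _
          (Finset.mem_insert_of_mem (Finset.mem_image_of_mem (fun q : ↥upperTbar => q.1.2) hq))⟩
      have hyt : y ≤ t := ht1.trans htt1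
      obtain ⟨n, hn⟩ : ∃ n : N.V (pt s t (by linarith)), N.mv _ (pt x t (by linarith)) n =
          N.mv (pt x y h) (pt x t (by linarith)) m := by
        refine ⟨N.mv _ _ n1, ?_⟩
        rw [mv_mv N (pt_le le_rfl htt1) (pt_le hsx le_rfl)]
        have hy1 : pt x y h ≤ pt x t1 (by linarith) := pt_le le_rfl ht1
        have hxt : pt x t1 (by linarith) ≤ pt x t (by linarith) := pt_le le_rfl htt1
        rw [← mv_mv N hy1 hxt, ← hn1, mv_mv N (pt_le hsx le_rfl) hxt]
      have hn0 : N.mv _ (pt s0 t (by linarith)) n = 0 := by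
        have hxs : pt x t (by linarith) ≤ pt s0 t (by linarith) := pt_le hs0 le_rfl
        have hys : pt s0 y (by linarith) ≤ pt s0 t (by linarith) := pt_le le_rfl hyt
        rw [← mv_mv N (pt_le hsx le_rfl) hxs, hn, mv_mv N (pt_le le_rfl hyt) hxs,
          ← mv_mv N (pt_le hs0 le_rfl) hys, hm0, map_zero]
      -- the good vectors
      let good : ∀ q, N.V q → Prop := fun q w =>
        (∀ r : ↥upperTbar, r.1.1 = q.1.1 → r.1.2 = t → N.mv q r w = N.mv (pt s t (by linarith)) r n) ∧
        (∀ r : ↥upperTbar, r.1.2 = q.1.2 → r.1.1 = s0 → N.mv q r w = 0)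
      have hex : ∀ q : ↥upperTbar, q.1.1 ∈ J → s ≤ q.1.1 → q.1.2 ≤ t → ∃ w, good q w := by
        intro q hqJ hsq hqt
        have hq2 : 0 ≤ q.1.1 + q.1.2 := q.2
        have hqs := (hJs0 _ hqJ).le
        obtain ⟨w, hw1, hw2⟩ := me' hme q (pt q.1.1 t (by linarith)) (pt s0 q.1.2 (by linarith))
          (pt s0 t (by linarith)) rfl rfl rfl rfl hqs hqt (N.mv (pt s t (by linarith)) _ n) 0 (by
            rw [mv_mv N (pt_le hsq le_rfl) (pt_le hqs le_rfl), hn0, map_zero])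
        refine ⟨w, ?_, ?_⟩
        · rintro ⟨⟨r1, r2⟩, hr⟩ hr1 hr2
          dsimp only at hr1 hr2
          subst hr1 hr2
          exact hw1
        · rintro ⟨⟨r1, r2⟩, hr⟩ hr1 hr2
          dsimp only at hr1 hr2
          subst hr1 hr2
          exact hw2
      have huniq : ∀ q : ↥upperTbar, q.1.1 ∈ J → q.1.2 ≤ t → ∀ w w', good q w →
          good q w' → w = w' := by
        intro q hqJ hqt w w' hw hw'
        have hq2 : 0 ≤ q.1.1 + q.1.2 := q.2
        have hqs := (hJs0 _ hqJ).le
        rw [← sub_eq_zero]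
        refine hle q (pt q.1.1 t (by linarith)) (pt s0 q.1.2 (by linarith)) rfl hqt rfl hqs _ ?_ ?_
        · rw [map_sub, hw.1 (pt q.1.1 t (by linarith)) rfl rfl, hw'.1 (pt q.1.1 t (by linarith)) rfl rfl, sub_self]
        · rw [map_sub, hw.2 (pt s0 q.1.2 (by linarith)) rfl rfl,
            hw'.2 (pt s0 q.1.2 (by linarith)) rfl rfl, sub_self]
      let v : ∀ q, N.V q := fun q => if hq : ∃ w, good q w then hq.choose else 0
      have hv : ∀ q : ↥upperTbar, q.1.1 ∈ J → s ≤ q.1.1 → q.1.2 ≤ t → good q (v q) := by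
        intro q h1 h2 h3
        have := hex q h1 h2 h3
        simp only [v, this, dif_pos]
        exact this.choose_spec
      refine ⟨v, fun ab hab => ⟨?_, ?_, ?_⟩⟩
      · refine huniq _ hxJ hyt _ _ (hv _ hxJ hsx hyt) ⟨?_, ?_⟩
        · rintro ⟨⟨r1, r2⟩, hr⟩ hr1 hr2
          dsimp only [pt] at hr1 hr2
          subst hr1 hr2
          exact hn.symm
        · rintro ⟨⟨r1, r2⟩, hr⟩ hr1 hr2
          dsimp only [pt] at hr1 hr2
          subst hr1 hr2
          exact hm0
      · intro r hr1 hr2 hr3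
        exact (hv _ hr1 (hsG _ (hG1 _ hab) hr1) (htG _ (hG1 _ hab))).2 r hr2 hr3
      · intro hq hr1 hr2
        have ht2 := htG _ (hG2 _ hab)
        have hg1 := hv _ hr1 (hsG _ (hG1 _ hab) hr1) (htG _ (hG1 _ hab))
        have hg2 := hv _ hr2 (hsG _ (hG2 _ hab) hr2) ht2
        obtain ⟨q, q'⟩ := ab
        dsimp only at *
        refine huniq _ hr2 ht2 _ _ ⟨?_, ?_⟩ hg2
        · intro r hr3 hr4
          have hq2 : 0 ≤ q.1.1 + q.1.2 := q.2
          have h1 : q ≤ pt q.1.1 t (by linarith [hq.2, htG _ (hG1 _ hab)]) :=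
            ⟨le_rfl, htG _ (hG1 _ hab)⟩
          have h2 : pt q.1.1 t (by linarith [hq.2, htG _ (hG1 _ hab)]) ≤ r :=
            ⟨hq.1.trans hr3.ge, hr4.ge⟩
          have h3 : q' ≤ r := ⟨hr3.ge, ht2.trans hr4.ge⟩
          rw [mv_mv N hq h3, ← mv_mv N h1 h2, hg1.1 (pt q.1.1 t (by linarith [htG _ (hG1 _ hab)])) rfl rfl,
            mv_mv N (pt_le (hsG _ (hG1 _ hab) hr1) le_rfl) h2]
        · intro r hr3 hr4
          have hq2 : 0 ≤ q.1.1 + q.1.2 := q.2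
          have hqs := (hJs0 _ hr1).le
          have hqs' := (hJs0 _ hr2).le
          have h1 : q ≤ pt s0 q.1.2 (by linarith) := ⟨hqs, le_rfl⟩
          have h2 : pt s0 q.1.2 (by linarith) ≤ r := ⟨hr4.ge, hq.2.trans hr3.ge⟩
          have h3 : q' ≤ r := ⟨hqs'.trans hr4.ge, hr3.ge⟩
          rw [mv_mv N hq h3, ← mv_mv N h1 h2, hg1.2 (pt s0 q.1.2 (by linarith)) rfl rfl, map_zero])
  exact ⟨v, (hv (pt x y h, pt x y h)).1, fun q r h1 h2 h3 => (hv (q, q)).2.1 r h1 h2 h3,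
    fun q q' h1 h2 h3 => (hv (q, q')).2.2 h1 h2 h3⟩

theorem step2 (hfd : ∀ p, FiniteDimensional k (N.V p)) (hme : MiddleExactSub upperTbar N)
    (hle : LeftEx N) {x y x' : ℝ} (hx : x ≤ x') (h : 0 ≤ x + y) (m' : N.V (pt x y h))
    (hm' : m' ≠ 0) (h1 : N.mv (pt x y h) (pt x' y (by linarith)) m' = 0) : HasBlock N := by
  classical
  obtain ⟨p, hp⟩ : ∃ p, p = pt x y h := ⟨_, rfl⟩
  let A : ℝ → Submodule k (N.V (pt x y h)) := fun s =>
    ⨆ h : x ≤ s, LinearMap.ker (N.mv (pt x y _) (pt s y (by linarith)))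
  have hA : ∀ s (hs : x ≤ s) n, n ∈ A s ↔ N.mv (pt x y h) (pt s y (by linarith)) n = 0 := by
    intro s h n
    simp [A, h]
  have hA0 : ∀ s, s ≤ x → A s = ⊥ := by
    intro s hs
    rcases hs.lt_or_eq with hs | rfl
    · simp [A, not_le.2 hs]
    · rw [eq_bot_iff]
      intro n hn
      rw [hA _ le_rfl] at hn
      rw [Submodule.mem_bot, ← mv_self N _ n]
      exact hn
  have hAm : ∀ s s', s ≤ s' → A s ≤ A s' := by
    intro s s' hs
    rcases le_total s x with h | h
    · rw [hA0 s h]; exact bot_le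
    · intro n hn
      rw [hA s h] at hn
      rw [hA s' (h.trans hs), ← mv_mv N (pt_le h le_rfl) (pt_le hs le_rfl)]
      exact (congrArg _ hn).trans (map_zero _)
  have := hfd (pt x y h)
  obtain ⟨s0, hne, hmin⟩ := exists_min_sub A ⟨x', fun hbot => hm' (by
      have : m' ∈ A x' := (hA _ hx _).2 h1
      rw [hbot] at this
      exact (Submodule.mem_bot k).1 this)⟩
  obtain ⟨m, hmA, hm⟩ := Submodule.exists_mem_ne_zero_of_ne_bot hne
  have hxs0 : x < s0 := by
    by_contra hc
    exact hne (hA0 _ (not_lt.1 hc))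
  have hbot : ∀ s, m ∉ A s → A s = ⊥ := by
    intro s hs
    by_contra hne'
    have hss : s ≤ s0 := by
      by_contra hc
      exact hs (hAm _ _ (not_le.1 hc).le hmA)
    exact hs (hmin s (hAm _ _ hss) hne' ▸ hmA)
  have hm0 := (hA s0 hxs0.le m).1 hmA
  let I : Set ℝ := {s | ∃ (t : ℝ) (ht : y ≤ t) (hst : 0 ≤ s + t) (n : N.V (pt s t hst)),
      N.mv _ (pt x t (by linarith)) n = N.mv (pt x y h) (pt x t (by linarith)) m}
  have hI : ∀ s s', s ≤ s' → s' ≤ x → s ∈ I → s' ∈ I := by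
    rintro s s' h3 h4 ⟨t, ht, hst, n, hn⟩
    refine ⟨t, ht, by linarith, N.mv _ _ n, ?_⟩
    rw [mv_mv N (pt_le h3 le_rfl) (pt_le h4 le_rfl), hn]
  have hxI : x ∈ I := ⟨y, le_rfl, h, m, rfl⟩
  let J : Set ℝ := {s | (s ≤ x ∧ s ∈ I) ∨ (x ≤ s ∧ m ∉ A s)}
  have hxJ : x ∈ J := Or.inl ⟨le_rfl, hxI⟩
  have hxA : m ∉ A x := by rw [hA0 x le_rfl]; exact hm
  have hJA : ∀ s ∈ J, m ∉ A s := by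
    rintro s (⟨h3, h4⟩ | ⟨h3, h4⟩)
    · exact fun h5 => hxA (hAm _ _ h3 h5)
    · exact h4
  have hJI : ∀ s ∈ J, s ≤ x → s ∈ I := by
    rintro s (⟨h3, h4⟩ | ⟨h3, h4⟩) h5
    · exact h4
    · rw [le_antisymm h5 h3]; exact hxI
  have hJs0 : ∀ s ∈ J, s < s0 := by
    intro s hs
    by_contra hc
    exact hJA s hs (hAm _ _ (not_lt.1 hc) hmA)
  have hJmax : ∀ s ∈ J, max s x ∈ J := by
    intro s hs
    rcases max_choice s x with h | h <;> rw [h]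
    exacts [hs, hxJ]
  have hJconv : IsConvex J := by
    intro a b c hab hbc ha hc
    rcases le_total b x with h3 | h3
    · exact Or.inl ⟨h3, hI a b hab h3 (hJI a ha (hab.trans h3))⟩
    · exact Or.inr ⟨h3, fun h4 => hJA c hc (hAm _ _ hbc h4)⟩
  obtain ⟨v, hvm, hv0, hv⟩ := step2_family hfd hme hle h m hxs0.le hm0 J hxJ hJs0 hJI
  -- the value at large points
  have hvbig : ∀ (q : ↥upperTbar), q.1.1 ∈ J → ∀ r : ↥upperTbar, q ≤ r → pt x y h ≤ r →
      N.mv q r (v q) = N.mv (pt x y h) r m := by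
    intro q hq r hqr hr
    have hq2 : 0 ≤ q.1.1 + q.1.2 := q.2
    have h3 : q ≤ pt (max q.1.1 x) (max q.1.2 y)
      (by linarith [le_max_left q.1.1 x, le_max_left q.1.2 y]) := ⟨le_max_left _ _, le_max_left _ _⟩
    have h4 : pt x y h ≤ pt (max q.1.1 x) (max q.1.2 y)
      (by linarith [le_max_left q.1.1 x, le_max_left q.1.2 y]) :=
      ⟨le_max_right _ _, le_max_right _ _⟩
    have h5 : pt (max q.1.1 x) (max q.1.2 y)
      (by linarith [le_max_left q.1.1 x, le_max_left q.1.2 y]) ≤ r :=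
      ⟨max_le hqr.1 hr.1, max_le hqr.2 hr.2⟩
    rw [← mv_mv N h3 h5, ← mv_mv N h4 h5, hv _ _ h3 hq (hJmax _ hq), ← hvm,
      hv _ _ h4 hxJ (hJmax _ hq)]
  have hsurv : ∀ s ∈ J, ∀ t (h3 : x ≤ s) (h4 : y ≤ t),
      N.mv (pt x y h) (pt s t (by linarith)) m ≠ 0 := by
    intro s hs t h3 h4 h0
    have hss := (hJs0 s hs).le
    have e : N.mv (pt x y h) (pt s y (by linarith)) m = 0 := by
      refine hle (pt s y (by linarith)) (pt s t (by linarith)) (pt s0 y (by linarith)) rfl h4 rfl hss _ ?_ ?_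
      · rw [mv_mv N (pt_le h3 le_rfl) (pt_le le_rfl h4), h0]
      · rw [mv_mv N (pt_le h3 le_rfl) (pt_le hss le_rfl), hm0]
    exact hJA s hs ((hA s h3 m).2 e)
  let φ : ∀ q, N.V q := fun q => if q.1.1 ∈ J then v q else 0
  have hφJ : ∀ q : ↥upperTbar, q.1.1 ∈ J → φ q = v q := fun q hq => if_pos hq
  have hφJ' : ∀ q : ↥upperTbar, q.1.1 ∉ J → φ q = 0 := fun q hq => if_neg hq
  have hdie : ∀ q q' : ↥upperTbar, q ≤ q' → q.1.1 ∈ J → q'.1.1 ∉ J → N.mv q q' (v q) = 0 := by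
    intro q q' hqq hq hq'
    have hxq : x ≤ q'.1.1 := by
      by_contra hc
      have hc' := (not_le.1 hc).le
      exact hq' (Or.inl ⟨hc', hI _ _ hqq.1 hc' (hJI _ hq (hqq.1.trans hc'))⟩)
    have hmq : m ∈ A q'.1.1 := by
      by_contra hc
      exact hq' (Or.inr ⟨hxq, hc⟩)
    have hq2 : 0 ≤ q.1.1 + q.1.2 := q.2
    have hq'1 := hqq.1
    obtain ⟨r, hr⟩ : ∃ r, r = pt q'.1.1 q.1.2 (by linarith [hqq.1]) := ⟨_, rfl⟩
    have hqr : q ≤ r := by subst hr; exact ⟨hqq.1, le_rfl⟩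
    have hrq : r ≤ q' := by subst hr; exact ⟨le_rfl, hqq.2⟩
    have hr1 : r.1.1 = q'.1.1 := by subst hr; rfl
    have hr2 : r.1.2 = q.1.2 := by subst hr; rfl
    have e : N.mv q r (v q) = 0 := by
      have hle1 := le_max_left r.1.2 y
      have hle2 := le_max_left r.1.1 s0
      have hr3 : 0 ≤ r.1.1 + r.1.2 := r.2
      have hb : r ≤ pt r.1.1 (max r.1.2 y) (by linarith) := ⟨le_rfl, le_max_left _ _⟩
      have hc : r ≤ pt (max r.1.1 s0) r.1.2 (by linarith) := ⟨le_max_left _ _, le_rfl⟩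
      refine hle r (pt r.1.1 (max r.1.2 y) (by linarith)) (pt (max r.1.1 s0) r.1.2 (by linarith)) rfl
        (le_max_left _ _) rfl (le_max_left _ _) _ ?_ ?_
      · have hpb : pt x y h ≤ pt r.1.1 (max r.1.2 y) (by linarith) :=
          ⟨hxq.trans hr1.ge, le_max_right _ _⟩
        rw [mv_mv N hqr hb, hvbig q hq _ (hqr.trans hb) hpb]
        have e2 := (hA _ hxq m).1 hmq
        have h5 : pt x y h ≤ pt q'.1.1 y (by linarith) := ⟨hxq, le_rfl⟩
        have h6 : pt q'.1.1 y (by linarith) ≤ pt r.1.1 (max r.1.2 y) (by linarith) :=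
          ⟨hr1.ge, le_max_right _ _⟩
        rw [← mv_mv N h5 h6, e2, map_zero]
      · have hqs := (hJs0 _ hq).le
        have h5 : q ≤ pt s0 q.1.2 (by linarith) := ⟨hqs, le_rfl⟩
        have h6 : pt s0 q.1.2 (by linarith) ≤ pt (max r.1.1 s0) r.1.2 (by linarith) :=
          ⟨le_max_right _ _, hr2.ge⟩
        rw [mv_mv N hqr hc, ← mv_mv N h5 h6, hv0 q (pt s0 q.1.2 (by linarith)) hq rfl rfl, map_zero]
    rw [← mv_mv N hqr hrq, e, map_zero]
  have hne' : J.Nonempty := ⟨x, hxJ⟩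
  refine ⟨J ×ˢ Set.univ, ⟨⟨(x, y), hxJ, trivial⟩, Or.inr (Or.inr (Or.inl ⟨J, ⟨hne', hJconv⟩,
    rfl⟩))⟩, ?_⟩
  let D : Set ↥upperTbar := {q | ∃ s ∈ J, q.1.1 ≤ s}
  let D' : Set ↥upperTbar := {q | q ∈ D ∧ q.1.1 ∉ J}
  have hDD : D \ D' = pre (J ×ˢ Set.univ) := by
    ext q
    constructor
    · rintro ⟨h3, h4⟩
      refine ⟨?_, trivial⟩
      by_contra h5
      exact h4 ⟨h3, h5⟩
    · rintro ⟨h3, -⟩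
      exact ⟨⟨_, h3, le_rfl⟩, fun h4 => h4.2 h3⟩
  have hmem : ∀ q : ↥upperTbar, q ∈ D \ D' ↔ q.1.1 ∈ J := by
    intro q
    rw [hDD]
    exact ⟨fun h => h.1, fun h => ⟨h, trivial⟩⟩
  have hsup : ∀ p q : ↥upperTbar, ∃ r : ↥upperTbar, p ≤ r ∧ q ≤ r ∧ r.1.1 = max p.1.1 q.1.1 := by
    intro p q
    have hp2 : 0 ≤ p.1.1 + p.1.2 := p.2
    exact ⟨pt (max p.1.1 q.1.1) (max p.1.2 q.1.2)
      (by linarith [le_max_left p.1.1 q.1.1, le_max_left p.1.2 q.1.2]),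
      ⟨le_max_left _ _, le_max_left _ _⟩, ⟨le_max_right _ _, le_max_right _ _⟩, rfl⟩
  have key := mkSplits N D D' (by
      rintro p q hpq ⟨s, hs, hqs⟩
      exact ⟨s, hs, hpq.1.trans hqs⟩)
    (by
      rintro p ⟨s, hs, hps⟩ q ⟨s', hs', hqs'⟩
      obtain ⟨r, h3, h4, h5⟩ := hsup p q
      refine ⟨r, ⟨max s s', ?_, ?_⟩, h3, h4⟩
      · rcases max_choice s s' with h | h <;> rw [h]
        exacts [hs, hs']
      · rw [h5]; exact max_le_max hps hqs')
    (fun q hq => hq.1)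
    (by
      rintro p q hpq ⟨⟨s, hs, hqs⟩, hq⟩
      refine ⟨⟨s, hs, hpq.1.trans hqs⟩, fun h3 => hq ?_⟩
      exact hJconv _ _ _ hpq.1 hqs h3 hs)
    (by
      rintro p ⟨⟨s, hs, hps⟩, hp⟩ q ⟨⟨s', hs', hqs'⟩, hq⟩
      obtain ⟨r, h3, h4, h5⟩ := hsup p q
      refine ⟨r, ⟨⟨max s s', ?_, ?_⟩, ?_⟩, h3, h4⟩
      · rcases max_choice s s' with h | h <;> rw [h]
        exacts [hs, hs']
      · rw [h5]; exact max_le_max hps hqs'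
      · rw [h5]
        rcases max_choice p.1.1 q.1.1 with h | h <;> rw [h]
        exacts [hp, hq])
    ⟨pt x y h, (hmem _).2 hxJ⟩ φ (fun q hq => hφJ' q (fun h3 => hq ((hmem q).2 h3)))
    (by
      intro q q' hqq hq
      rw [hmem] at hq
      rw [hφJ q hq]
      by_cases hq' : q'.1.1 ∈ J
      · rw [hφJ q' hq']; exact hv q q' hqq hq hq'
      · rw [hφJ' q' hq']; exact hdie q q' hqq hq hq')
    (by
      intro r hr h0
      rw [hmem] at hr
      rw [hφJ r hr] at h0
      have hr3 : 0 ≤ r.1.1 + r.1.2 := r.2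
      have hle1 := le_max_left r.1.1 x
      have hle2 := le_max_left r.1.2 y
      refine hsurv (max r.1.1 x) (hJmax _ hr) (max r.1.2 y) (le_max_right _ _) (le_max_right _ _) ?_
      rw [← hvbig r hr _ ⟨le_max_left _ _, le_max_left _ _⟩ ⟨le_max_right _ _, le_max_right _ _⟩,
        h0, map_zero])
    (by
      intro r hr q hq hqr n hn
      rw [hmem] at hr
      rw [hφJ r hr] at hn
      obtain ⟨⟨s', hs', hqs'⟩, hqJ⟩ := hq
      have hqx : q.1.1 ≤ x := by
        by_contra hc
        have hc' := (not_le.1 hc).le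
        exact hqJ (hJconv _ _ _ hc' hqs' hxJ hs')
      apply hqJ
      refine Or.inl ⟨hqx, ?_⟩
      have hr3 : 0 ≤ r.1.1 + r.1.2 := r.2
      have hq3 : 0 ≤ q.1.1 + q.1.2 := q.2
      have hle1 := le_max_left r.1.1 x
      have hle2 := le_max_left r.1.2 y
      have hle3 := le_max_right r.1.1 x
      have hle4 := le_max_right r.1.2 y
      have hqr2 := hqr.2
      let t := max r.1.2 y
      have hqt : q ≤ pt q.1.1 t (by linarith) := ⟨le_rfl, hqr.2.trans hle2⟩
      refine ⟨t, hle4, by linarith, N.mv q _ n, ?_⟩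
      rw [mv_mv N hqt (pt_le hqx le_rfl), ← sub_eq_zero]
      have hqxt : q ≤ pt x t (by linarith) := hqt.trans (pt_le hqx le_rfl)
      have hpxt : pt x y h ≤ pt x t (by linarith) := pt_le le_rfl hle4
      have hxr : pt x t (by linarith) ≤ pt (max r.1.1 x) t (by linarith) := pt_le hle3 le_rfl
      have hrr : r ≤ pt (max r.1.1 x) t (by linarith) := ⟨hle1, hle2⟩
      obtain ⟨w, hw1, hw2⟩ := me' hme (pt x y h) (pt x t (by linarith))
        (pt (max r.1.1 x) y (by linarith)) (pt (max r.1.1 x) t (by linarith)) rfl rfl rfl rfl hle3 hle4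
        (N.mv q _ n - N.mv _ _ m) 0 (by
          rw [map_zero, map_sub, mv_mv N hqxt hxr, mv_mv N hpxt hxr, ← mv_mv N hqr hrr, hn,
            hvbig r hr _ hrr (hpxt.trans hxr), sub_self])
      have hwA : w ∈ A (max r.1.1 x) := (hA _ hle3 w).2 hw2
      rw [hbot _ (hJA _ (hJmax _ hr)), Submodule.mem_bot] at hwA
      rw [← hw1, hwA, map_zero])
  rw [hDD] at key
  exact key

end Plane2

end PMod


namespace PMod

section Plane3

variable {k : Type} [Field k] {N : PersistenceModule k ↥upperTbar}

/-- Reflection of the triangle. -/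
def sw (q : ↥upperTbar) : ↥upperTbar := ⟨(q.1.2, q.1.1), by
  have : 0 ≤ q.1.1 + q.1.2 := q.2
  change 0 ≤ q.1.2 + q.1.1
  linarith⟩

theorem sw_le {q r : ↥upperTbar} (h : q ≤ r) : sw q ≤ sw r := ⟨h.2, h.1⟩

/-- The reflected module. -/
def swapMod (N : PersistenceModule k ↥upperTbar) : PersistenceModule k ↥upperTbar where
  V q := N.V (sw q)
  map h := N.map (sw_le h)
  map_refl q := N.map_refl (sw q)
  map_trans h h' := N.map_trans (sw_le h) (sw_le h')

theorem swap_mv (N : PersistenceModule k ↥upperTbar) {q r : ↥upperTbar} (h : q ≤ r) :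
    (swapMod N).mv q r = N.mv (sw q) (sw r) := by
  rw [mv_eq _ h, mv_eq _ (sw_le h)]; rfl

theorem swap_me (hme : MiddleExactSub upperTbar N) : MiddleExactSub upperTbar (swapMod N) := by
  intro x x' y y' hx hy ha hb hc hd mb mc h
  obtain ⟨ma, h1, h2⟩ := hme y y' x x' hy hx (sw ⟨(x, y), ha⟩).2 (sw ⟨(x', y), hc⟩).2
    (sw ⟨(x, y'), hb⟩).2 (sw ⟨(x', y'), hd⟩).2 mc mb h.symm
  exact ⟨ma, h2, h1⟩

theorem swap_le (hle : LeftEx N) : LeftEx (swapMod N) := by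
  intro a b c h1 h2 h3 h4 m h5 h6
  rw [swap_mv N ⟨h1.ge, h2⟩] at h5
  rw [swap_mv N ⟨h4, h3.ge⟩] at h6
  exact hle (sw a) (sw c) (sw b) h3 h4 h1 h2 m h6 h5

theorem swap_hasBlock (h : HasBlock (swapMod N)) : HasBlock N := by
  obtain ⟨J, hJ, ⟨q0, hq0⟩, φ, f, h1, h2, h3, h4, h5⟩ := h
  refine ⟨Prod.swap ⁻¹' J, ?_, ⟨sw q0, hq0⟩, fun q => φ (sw q), fun q => f (sw q),
    fun q hq => h1 (sw q) hq, fun q hq => h2 (sw q) hq, ?_, ?_, fun q hq => h5 (sw q) hq⟩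
  · obtain ⟨⟨⟨x, y⟩, hne⟩, h | h | h | h⟩ := hJ
    · obtain ⟨JS, JT, a, b, c, d, rfl⟩ := h
      exact ⟨⟨(y, x), hne⟩, Or.inl ⟨JT, JS, c, d, a, b, Set.preimage_swap_prod _ _⟩⟩
    · obtain ⟨JS, JT, a, b, c, d, rfl⟩ := h
      exact ⟨⟨(y, x), hne⟩, Or.inr (Or.inl ⟨JT, JS, c, d, a, b, Set.preimage_swap_prod _ _⟩)⟩
    · obtain ⟨JS, a, rfl⟩ := h
      exact ⟨⟨(y, x), hne⟩, Or.inr (Or.inr (Or.inr ⟨JS, a, Set.preimage_swap_prod _ _⟩))⟩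
    · obtain ⟨JS, a, rfl⟩ := h
      exact ⟨⟨(y, x), hne⟩, Or.inr (Or.inr (Or.inl ⟨JS, a, Set.preimage_swap_prod _ _⟩))⟩
  · intro q q' hq hqB
    have := h3 (sw q) (sw q') (sw_le hq) hqB
    rw [swap_mv N (sw_le hq)] at this
    exact this
  · intro q q' hq hqB n
    have := h4 (sw q) (sw q') (sw_le hq) hqB n
    rw [swap_mv N (sw_le hq)] at this
    exact this

theorem step3 (hfd : ∀ p, FiniteDimensional k (N.V p)) (hme : MiddleExactSub upperTbar N)
    (hinj : ∀ q r, q ≤ r → ∀ n : N.V q, N.mv q r n = 0 → n = 0)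
    (p : ↥upperTbar) (n0 : N.V p) (hn0 : n0 ≠ 0) : HasBlock N := by
  classical
  have hsup : ∀ p q : ↥upperTbar, ∃ r : ↥upperTbar, p ≤ r ∧ q ≤ r ∧ r.1.1 = max p.1.1 q.1.1 ∧
      r.1.2 = max p.1.2 q.1.2 := by
    intro p q
    have hp2 : 0 ≤ p.1.1 + p.1.2 := p.2
    exact ⟨pt (max p.1.1 q.1.1) (max p.1.2 q.1.2)
      (by linarith [le_max_left p.1.1 q.1.1, le_max_left p.1.2 q.1.2]),
      ⟨le_max_left _ _, le_max_left _ _⟩, ⟨le_max_right _ _, le_max_right _ _⟩, rfl, rfl⟩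
  let fm : ∀ i j : ↥upperTbar, i ≤ j → N.V i →ₗ[k] N.V j := fun i j _ => N.mv i j
  have : DirectedSystem N.V (fm · · ·) :=
    ⟨fun i x => mv_self N i x, fun i j l hij hjl x => mv_mv N hij hjl x⟩
  have : Nonempty ↥upperTbar := ⟨p⟩
  have : IsDirectedOrder ↥upperTbar := ⟨fun a b => by
    obtain ⟨r, h, h', -⟩ := hsup a b
    exact ⟨r, h, h'⟩⟩
  let C := Module.DirectLimit N.V fm
  let o : ∀ i, N.V i →ₗ[k] C := fun i => Module.DirectLimit.of k _ N.V fm i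
  have ho : ∀ i j (h : i ≤ j) x, o j (N.mv i j x) = o i x := fun i j h x =>
    Module.DirectLimit.of_f (hij := h)
  have hoz : ∀ i x, o i x = 0 → x = 0 := by
    intro i x hx
    obtain ⟨j, hij, hj⟩ := Module.DirectLimit.of.zero_exact hx
    exact hinj i j hij x hj
  have hoi : ∀ i x x', o i x = o i x' → x = x' := by
    intro i x x' h
    rw [← sub_eq_zero] at h ⊢
    rw [← map_sub] at h
    exact hoz i _ h
  have hglue : ∀ r q q' : ↥upperTbar, q.1.1 ≤ r.1.1 → q'.1.2 ≤ r.1.2 → ∀ n n', o q n = o q' n' →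
      ∃ w, o r w = o q n := by
    intro r q q' h1 h2 n n' hnn
    have hr2 : 0 ≤ r.1.1 + r.1.2 := r.2
    have l1 := le_max_left r.1.2 q.1.2
    have l2 := le_max_right r.1.2 q.1.2
    have l3 := le_max_left r.1.1 q'.1.1
    have l4 := le_max_right r.1.1 q'.1.1
    obtain ⟨b, hb⟩ : ∃ b, b = pt r.1.1 (max r.1.2 q.1.2) (by linarith) := ⟨_, rfl⟩
    obtain ⟨c, hc⟩ : ∃ c, c = pt (max r.1.1 q'.1.1) r.1.2 (by linarith) := ⟨_, rfl⟩
    obtain ⟨d, hd⟩ : ∃ d, d = pt (max r.1.1 q'.1.1) (max r.1.2 q.1.2) (by linarith) := ⟨_, rfl⟩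
    have hqb : q ≤ b := by subst hb; exact ⟨h1, l2⟩
    have hqc : q' ≤ c := by subst hc; exact ⟨l4, h2⟩
    have hbd : b ≤ d := by subst hb hd; exact ⟨l3, le_rfl⟩
    have hcd : c ≤ d := by subst hc hd; exact ⟨le_rfl, l1⟩
    have hrb : r ≤ b := by subst hb; exact ⟨le_rfl, l1⟩
    obtain ⟨w, hw1, hw2⟩ := me' hme r b c d (by rw [hb]; rfl) (by rw [hc]; rfl) (by rw [hc, hd]; rfl)
      (by rw [hb, hd]; rfl) (by rw [hc]; exact l3) (by rw [hb]; exact l1) (N.mv q b n) (N.mv q' c n')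
      (hoi _ _ _ (by rw [ho _ _ hbd, ho _ _ hqb, ho _ _ hcd, ho _ _ hqc, hnn]))
    refine ⟨w, ?_⟩
    rw [← ho r b hrb, hw1, ho _ _ hqb]
  have hdg1 : ∀ s, ∃ q : ↥upperTbar, q.1.1 = s := fun s => ⟨pt s (-s) (by simp), rfl⟩
  have hdg2 : ∀ s, ∃ q : ↥upperTbar, q.1.2 = s := fun s => ⟨pt (-s) s (by simp), rfl⟩
  let X : ℝ → Submodule k C := fun s =>
    { carrier := {c | ∃ q : ↥upperTbar, q.1.1 ≤ s ∧ ∃ n, o q n = c}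
      zero_mem' := by
        obtain ⟨q, hq⟩ := hdg1 s
        exact ⟨q, hq.le, 0, map_zero _⟩
      add_mem' := by
        rintro _ _ ⟨q, hq, n, rfl⟩ ⟨q', hq', n', rfl⟩
        obtain ⟨r, h1, h2, h3, -⟩ := hsup q q'
        exact ⟨r, by rw [h3]; exact max_le hq hq', N.mv q r n + N.mv q' r n', by
          rw [map_add, ho _ _ h1, ho _ _ h2]⟩
      smul_mem' := by
        rintro a _ ⟨q, hq, n, rfl⟩
        exact ⟨q, hq, a • n, map_smul _ _ _⟩ }
  let Y : ℝ → Submodule k C := fun s =>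
    { carrier := {c | ∃ q : ↥upperTbar, q.1.2 ≤ s ∧ ∃ n, o q n = c}
      zero_mem' := by
        obtain ⟨q, hq⟩ := hdg2 s
        exact ⟨q, hq.le, 0, map_zero _⟩
      add_mem' := by
        rintro _ _ ⟨q, hq, n, rfl⟩ ⟨q', hq', n', rfl⟩
        obtain ⟨r, h1, h2, -, h3⟩ := hsup q q'
        exact ⟨r, by rw [h3]; exact max_le hq hq', N.mv q r n + N.mv q' r n', by
          rw [map_add, ho _ _ h1, ho _ _ h2]⟩
      smul_mem' := by
        rintro a _ ⟨q, hq, n, rfl⟩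
        exact ⟨q, hq, a • n, map_smul _ _ _⟩ }
  have hX : ∀ s s', s ≤ s' → X s ≤ X s' := by
    rintro s s' h _ ⟨q, hq, n, rfl⟩
    exact ⟨q, hq.trans h, n, rfl⟩
  have hY : ∀ s s', s ≤ s' → Y s ≤ Y s' := by
    rintro s s' h _ ⟨q, hq, n, rfl⟩
    exact ⟨q, hq.trans h, n, rfl⟩
  have hXY : ∀ (r : ↥upperTbar) c, c ∈ X r.1.1 → c ∈ Y r.1.2 → ∃ w, o r w = c := by
    rintro r c ⟨q, hq, n, hn⟩ ⟨q', hq', n', hn'⟩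
    rw [← hn]
    exact hglue r q q' hq hq' n n' (hn.trans hn'.symm)
  have hXo : ∀ q n, o q n ∈ X q.1.1 := fun q n => ⟨q, le_rfl, n, rfl⟩
  have hYo : ∀ q n, o q n ∈ Y q.1.2 := fun q n => ⟨q, le_rfl, n, rfl⟩
  have := hfd p
  obtain ⟨s1, hne, hmin⟩ := exists_min_sub (fun s => (X s).comap (o p)) ⟨p.1.1, fun h => hn0 (by
    have : n0 ∈ (X p.1.1).comap (o p) := hXo p n0
    rw [h] at this
    exact (Submodule.mem_bot k).1 this)⟩
  obtain ⟨n, hn, hn'⟩ := Submodule.exists_mem_ne_zero_of_ne_bot hne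
  obtain ⟨c, hc⟩ : ∃ c, c = o p n := ⟨_, rfl⟩
  have hc0 : c ≠ 0 := by
    rintro rfl
    exact hn' (hoz p n hc.symm)
  let JS : Set ℝ := {s | c ∈ X s}
  let JT : Set ℝ := {s | c ∈ Y s}
  have hSf : IsFilter JS := fun a b hab ha => hX _ _ hab ha
  have hTf : IsFilter JT := fun a b hab ha => hY _ _ hab ha
  have hpS : p.1.1 ∈ JS := by change c ∈ X p.1.1; rw [hc]; exact hXo p n
  have hpT : p.1.2 ∈ JT := by change c ∈ Y p.1.2; rw [hc]; exact hYo p n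
  have hbot : ∀ s, s ∉ JS → (X s).comap (o p) = ⊥ := by
    intro s hs
    by_contra hne'
    have hs1 : s ≤ s1 := by
      by_contra h
      refine hs (hX _ _ (not_le.1 h).le ?_)
      rw [hc]; exact hn
    have := hmin s (Submodule.comap_mono (hX _ _ hs1)) hne'
    rw [← this] at hn
    apply hs
    change c ∈ X s
    rw [hc]
    exact hn
  let Xl : Submodule k C := ⨆ s : {s // s ∉ JS}, X s
  let Yl : Submodule k C := ⨆ s : {s // s ∉ JT}, Y s
  have hXl : ∀ u ∈ Xl, u = 0 ∨ ∃ s, s ∉ JS ∧ u ∈ X s := by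
    intro u hu
    by_cases hne : Nonempty {s // s ∉ JS}
    · obtain ⟨s, hs⟩ := (Submodule.mem_iSup_of_directed (fun s : {s // s ∉ JS} => X s.1)
        (Monotone.directed_le fun a b hab => hX _ _ hab)).1 hu
      exact Or.inr ⟨s, s.2, hs⟩
    · rw [not_nonempty_iff] at hne
      simp only [Xl, iSup_of_empty, Submodule.mem_bot] at hu
      exact Or.inl hu
  have hYl : ∀ u ∈ Yl, u = 0 ∨ ∃ s, s ∉ JT ∧ u ∈ Y s := by
    intro u hu
    by_cases hne : Nonempty {s // s ∉ JT}
    · obtain ⟨s, hs⟩ := (Submodule.mem_iSup_of_directed (fun s : {s // s ∉ JT} => Y s.1)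
        (Monotone.directed_le fun a b hab => hY _ _ hab)).1 hu
      exact Or.inr ⟨s, s.2, hs⟩
    · rw [not_nonempty_iff] at hne
      simp only [Yl, iSup_of_empty, Submodule.mem_bot] at hu
      exact Or.inl hu
  have hcl : c ∉ Xl ⊔ Yl := by
    intro hcl
    obtain ⟨u, hu, v, hv, huv⟩ := Submodule.mem_sup.1 hcl
    have hvp : v ∈ Y p.1.2 := by
      rcases hYl v hv with rfl | ⟨t, ht, hvt⟩
      · exact zero_mem _
      · refine hY t _ ?_ hvt
        by_contra h
        exact ht (hTf _ _ (not_le.1 h).le hpT)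
    have hu0 : u = 0 := by
      rcases hXl u hu with h | ⟨s, hs, hus⟩
      · exact h
      · have hup : u ∈ Y p.1.2 := by
          have : u = c - v := by rw [← huv]; simp
          rw [this]
          exact sub_mem hpT hvp
        have hup' : u ∈ X p.1.1 := by
          refine hX s _ ?_ hus
          by_contra h
          exact hs (hSf _ _ (not_le.1 h).le hpS)
        obtain ⟨w, rfl⟩ := hXY p u hup' hup
        have hw : w ∈ (X s).comap (o p) := hus
        rw [hbot s hs, Submodule.mem_bot] at hw
        rw [hw, map_zero]
    rw [hu0, zero_add] at huv
    subst huv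
    rcases hYl v hv with h | ⟨t, ht, hvt⟩
    · exact hc0 h
    · exact ht hvt
  obtain ⟨g, hg, hgl⟩ := Submodule.exists_le_ker_of_notMem hcl
  have hex : ∀ q : ↥upperTbar, q ∈ pre (JS ×ˢ JT) → ∃ w, o q w = c := fun q hq =>
    hXY q c hq.1 hq.2
  let φ : ∀ q, N.V q := fun q => if h : q ∈ pre (JS ×ˢ JT) then (hex q h).choose else 0
  have hφ : ∀ q, q ∈ pre (JS ×ˢ JT) → o q (φ q) = c := by
    intro q hq
    simp only [φ, hq, dif_pos]
    exact (hex q hq).choose_spec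
  have hup : ∀ q q', q ≤ q' → q ∈ pre (JS ×ˢ JT) → q' ∈ pre (JS ×ˢ JT) := fun q q' h hq =>
    ⟨hSf _ _ h.1 hq.1, hTf _ _ h.2 hq.2⟩
  have hp : p ∈ pre (JS ×ˢ JT) := ⟨hpS, hpT⟩
  refine ⟨JS ×ˢ JT, ⟨⟨p.1, hp⟩, Or.inr (Or.inl ⟨JS, JT, ⟨⟨_, hpS⟩, hSf.isConvex⟩, hSf,
    ⟨⟨_, hpT⟩, hTf.isConvex⟩, hTf, rfl⟩)⟩, ⟨p, hp⟩, φ,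
    fun q => if q ∈ pre (JS ×ˢ JT) then (g c)⁻¹ • (g ∘ₗ o q) else 0, fun q hq => dif_neg hq,
    fun q hq => if_neg hq, ?_, ?_, ?_⟩
  · intro q q' h hq
    apply hoi
    rw [ho _ _ h, hφ q hq, hφ q' (hup q q' h hq)]
  · intro q q' h hq' n
    beta_reduce
    rw [if_pos hq']
    by_cases hq : q ∈ pre (JS ×ˢ JT)
    · rw [if_pos hq]
      simp only [LinearMap.smul_apply, LinearMap.comp_apply, ho _ _ h]
    · rw [if_neg hq]
      simp only [LinearMap.smul_apply, LinearMap.comp_apply, ho _ _ h, LinearMap.zero_apply]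
      have : o q n ∈ Xl ⊔ Yl := by
        by_cases h1 : q.1.1 ∈ JS
        · have h2 : q.1.2 ∉ JT := fun h2 => hq ⟨h1, h2⟩
          exact Submodule.mem_sup_right (Submodule.mem_iSup_of_mem
            (p := fun s : {s // s ∉ JT} => Y s) ⟨_, h2⟩ (hYo q n))
        · exact Submodule.mem_sup_left (Submodule.mem_iSup_of_mem
            (p := fun s : {s // s ∉ JS} => X s) ⟨_, h1⟩ (hXo q n))
      rw [LinearMap.mem_ker.1 (hgl this), smul_zero]
  · intro q hq
    beta_reduce
    rw [if_pos hq]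
    simp only [LinearMap.smul_apply, LinearMap.comp_apply, hφ q hq]
    exact inv_mul_cancel₀ hg

theorem hasBlock (hfd : ∀ p, FiniteDimensional k (N.V p)) (hme : MiddleExactSub upperTbar N)
    (p : ↥upperTbar) (n0 : N.V p) (hn0 : n0 ≠ 0) : HasBlock N := by
  by_cases hle : LeftEx N
  swap
  · unfold LeftEx at hle
    push Not at hle
    obtain ⟨⟨⟨a1, a2⟩, ha⟩, ⟨⟨b1, b2⟩, hb⟩, ⟨⟨c1, c2⟩, hc⟩, h1, h2, h3, h4, m, h5, h6, h7⟩ := hle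
    dsimp only at h1 h2 h3 h4
    subst h1 h3
    exact step1 hfd hme h4 h2 ha m h7 h6 h5
  by_cases hh : ∀ (a b : ↥upperTbar), a ≤ b → a.1.2 = b.1.2 → ∀ m : N.V a, N.mv a b m = 0 → m = 0
  swap
  · push Not at hh
    obtain ⟨⟨⟨a1, a2⟩, ha⟩, ⟨⟨b1, b2⟩, hb⟩, h1, h2, m, h3, h4⟩ := hh
    dsimp only at h2
    subst h2
    exact step2 hfd hme hle h1.1 ha m h4 h3
  by_cases hv : ∀ (a b : ↥upperTbar), a ≤ b → a.1.1 = b.1.1 → ∀ m : N.V a, N.mv a b m = 0 → m = 0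
  swap
  · push Not at hv
    obtain ⟨⟨⟨a1, a2⟩, ha⟩, ⟨⟨b1, b2⟩, hb⟩, h1, h2, m, h3, h4⟩ := hv
    dsimp only at h2
    subst h2
    apply swap_hasBlock
    have ha' : 0 ≤ a1 + a2 := ha
    have h1' : a2 ≤ b2 := h1.2
    refine step2 (fun p => hfd (sw p)) (swap_me hme) (swap_le hle) (x := a2) (y := a1) (x' := b2)
      h1' (by linarith) m h4 ?_
    rw [swap_mv N (pt_le h1' le_rfl)]
    exact h3
  refine step3 hfd hme ?_ p n0 hn0
  intro q r hqr n hn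
  have hq2 : 0 ≤ q.1.1 + q.1.2 := q.2
  have h1 : q ≤ pt r.1.1 q.1.2 (by linarith [hqr.1]) := ⟨hqr.1, le_rfl⟩
  have h2 : pt r.1.1 q.1.2 (by linarith [hqr.1]) ≤ r := ⟨le_rfl, hqr.2⟩
  rw [← mv_mv N h1 h2] at hn
  exact hh _ _ h1 rfl _ (hv _ _ h2 rfl _ hn)

end Plane3

end PMod


namespace PMod

section Zorn

variable {k : Type} [Field k] {P : Type} [Preorder P]

/-- Natural idempotent families. -/
def NatIdem (N : PersistenceModule k P) (e : ∀ q, Module.End k (N.V q)) : Prop :=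
  (∀ q q', q ≤ q' → ∀ n, e q' (N.mv q q' n) = N.mv q q' (e q n)) ∧
    ∀ q n, e q (e q n) = e q n

/-- A submodule of a persistence module. -/
def subMod (N : PersistenceModule k P) (W : ∀ q, Submodule k (N.V q))
    (hW : ∀ q q' (h : q ≤ q'), ∀ n ∈ W q, N.map h n ∈ W q') : PersistenceModule k P where
  V q := W q
  map {q q'} h := (N.map h).restrict (hW q q' h)
  map_refl q := by
    ext n
    simp [N.map_refl]
  map_trans hxy hyz := by
    ext n
    simp [N.map_trans hxy hyz]

theorem subMod_mv (N : PersistenceModule k P) (W : ∀ q, Submodule k (N.V q))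
    (hW : ∀ q q' (h : q ≤ q'), ∀ n ∈ W q, N.map h n ∈ W q') (q q' : P) (h : q ≤ q') (n : W q) :
    ((subMod N W hW).mv q q' n : W q').1 = N.mv q q' n.1 := by
  rw [mv_eq _ h, mv_eq _ h]
  rfl

theorem ext_internal {V V' : Type} [AddCommGroup V] [Module k V] [AddCommGroup V'] [Module k V']
    {ι : Type} (W : ι → Submodule k V) (h : ⨆ i, W i = ⊤) (f g : V →ₗ[k] V')
    (hfg : ∀ i, ∀ w ∈ W i, f w = g w) : f = g := by
  ext v
  have hv : v ∈ ⨆ i, W i := h ▸ Submodule.mem_top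
  have : ⨆ i, W i ≤ LinearMap.eqLocus f g := iSup_le fun i w hw => hfg i w hw
  exact this hv

/-- Decomposition map. -/
noncomputable def dec {V : Type} [AddCommGroup V] [Module k V]
    {ι : Type} [DecidableEq ι] (W : ι → Submodule k V) (h : DirectSum.IsInternal W) : V ≃ₗ[k] Π₀ i, W i :=
  (LinearEquiv.ofBijective (DirectSum.coeLinearMap W) h).symm

theorem dec_of {V : Type} [AddCommGroup V] [Module k V]
    {ι : Type} [DecidableEq ι] (W : ι → Submodule k V) (h : DirectSum.IsInternal W) (i : ι) (w : W i) :
    dec W h w.1 = DFinsupp.single i w := by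
  unfold dec
  rw [LinearEquiv.symm_apply_eq]
  exact (DirectSum.coeLinearMap_of W i w).symm

theorem eig_of_max {V : Type} [AddCommGroup V] [Module k V] [FiniteDimensional k V]
    (e : Module.End k V) (he : ∀ n, e (e n) = e n) (c : k) :
    e.maxGenEigenspace c = e.eigenspace c := by
  apply Module.End.IsFinitelySemisimple.maxGenEigenspace_eq_eigenspace
  apply Module.End.IsSemisimple.isFinitelySemisimple
  have hc : IsCoprime (Polynomial.X - Polynomial.C (0 : k)) (Polynomial.X - Polynomial.C (1 : k)) :=
    Polynomial.isCoprime_X_sub_C_of_isUnit_sub (by simp)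
  have hs : Squarefree ((Polynomial.X - Polynomial.C (0 : k)) *
      (Polynomial.X - Polynomial.C (1 : k))) :=
    (Polynomial.separable_X_sub_C.mul Polynomial.separable_X_sub_C hc).squarefree
  refine Module.End.isSemisimple_of_squarefree_aeval_eq_zero hs ?_
  ext n
  simp [he]

theorem iSup_max_top {V : Type} [AddCommGroup V] [Module k V] [FiniteDimensional k V]
    (e : Module.End k V) (he : ∀ n, e (e n) = e n) :
    ⨆ c, e.maxGenEigenspace c = ⊤ := by
  rw [eq_top_iff]
  intro n _
  have h : n = (n - e n) + e n := by abel
  rw [h]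
  refine add_mem (Submodule.mem_iSup_of_mem 0 ?_) (Submodule.mem_iSup_of_mem 1 ?_)
  · rw [eig_of_max e he, Module.End.mem_eigenspace_iff]
    simp [he]
  · rw [eig_of_max e he, Module.End.mem_eigenspace_iff]
    simp [he]

theorem decomposition (N : PersistenceModule k P) (hfd : ∀ p, FiniteDimensional k (N.V p)) :
    ∃ (ι : Type) (W : ι → ∀ q, Submodule k (N.V q))
      (hW : ∀ i q q' (h : q ≤ q'), ∀ n ∈ W i q, N.map h n ∈ W i q'),
      (by classical exact ∀ q, DirectSum.IsInternal fun i => W i q) ∧ (∀ i, ∃ q, W i q ≠ ⊥) ∧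
      ∀ i, ∀ e, NatIdem (subMod N (W i) (hW i)) e →
        (∀ q n, e q n = 0) ∨ (∀ q n, e q n = n) := by
  classical
  obtain ⟨S, hS, hmax⟩ := zorn_subset
    {S : Set (∀ q, Module.End k (N.V q)) | (∀ e ∈ S, NatIdem N e) ∧
      ∀ e ∈ S, ∀ f ∈ S, ∀ q n, e q (f q n) = f q (e q n)} (by
    intro c hc hch
    refine ⟨⋃₀ c, ⟨?_, ?_⟩, fun s hs => Set.subset_sUnion_of_mem hs⟩
    · rintro e ⟨s, hs, he⟩
      exact (hc hs).1 e he
    · rintro e ⟨s, hs, he⟩ f ⟨t, ht, hf⟩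
      rcases hch.total hs ht with h | h
      · exact (hc ht).2 e (h he) f hf
      · exact (hc hs).2 e he f (h hf))
  let W0 : (S → k) → ∀ q, Submodule k (N.V q) := fun χ q => ⨅ e : S, (e.1 q).maxGenEigenspace (χ e)
  have hW0 : ∀ χ q n, n ∈ W0 χ q ↔ ∀ e : S, e.1 q n = χ e • n := by
    intro χ q n
    simp only [W0, Submodule.mem_iInf]
    refine forall_congr' fun e => ?_
    rw [eig_of_max _ ((hS.1 e.1 e.2).2 q), Module.End.mem_eigenspace_iff]
  have hcomm : ∀ q, ∀ e f : S, Commute (e.1 q) (f.1 q) := fun q e f =>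
    LinearMap.ext fun n => hS.2 e.1 e.2 f.1 f.2 q n
  have hind : ∀ q, iSupIndep fun χ => W0 χ q := fun q =>
    Module.End.independent_iInf_maxGenEigenspace_of_forall_mapsTo (fun e : S => e.1 q)
      (fun i j => Module.End.mapsTo_maxGenEigenspace_of_comm (hcomm q j i))
  have htop : ∀ q, ⨆ χ, W0 χ q = ⊤ := fun q =>
    Module.End.iSup_iInf_maxGenEigenspace_eq_top_of_iSup_maxGenEigenspace_eq_top_of_commute
      (fun e : S => e.1 q) (fun i j _ => hcomm q i j)
      (fun e => iSup_max_top _ ((hS.1 e.1 e.2).2 q))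
  have hst : ∀ χ q q' (h : q ≤ q'), ∀ n ∈ W0 χ q, N.map h n ∈ W0 χ q' := by
    intro χ q q' h n hn
    rw [hW0] at hn ⊢
    intro e
    have := (hS.1 e.1 e.2).1 q q' h n
    rw [mv_eq _ h] at this
    rw [this, hn, map_smul]
  let ι := {χ : S → k // ∃ q, W0 χ q ≠ ⊥}
  have htop' : ∀ q, ⨆ i : ι, W0 i.1 q = ⊤ := by
    intro q
    rw [eq_top_iff, ← htop q]
    refine iSup_le fun χ => ?_
    by_cases h : W0 χ q = ⊥
    · rw [h]; exact bot_le
    · exact le_iSup (fun i : ι => W0 i.1 q) ⟨χ, q, h⟩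
  have hinternal : ∀ q, DirectSum.IsInternal fun i : ι => W0 i.1 q := by
    intro q
    rw [DirectSum.isInternal_submodule_iff_iSupIndep_and_iSup_eq_top]
    exact ⟨(hind q).comp Subtype.val_injective, htop' q⟩
  refine ⟨ι, fun i => W0 i.1, fun i => hst i.1, fun q => by convert hinternal q, fun i => i.2, ?_⟩
  intro i e he
  let pr : ∀ q, N.V q →ₗ[k] W0 i.1 q := fun q =>
    (DFinsupp.lapply i : (Π₀ j : ι, W0 j.1 q) →ₗ[k] W0 i.1 q) ∘ₗ (dec _ (hinternal q)).toLinearMap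
  have pr_same : ∀ q (w : W0 i.1 q), pr q w.1 = w := by
    intro q w
    have := dec_of _ (hinternal q) i w
    simp [pr, this]
  have pr_ne : ∀ q (j : ι) (_ : j ≠ i) (w : W0 j.1 q), pr q w.1 = 0 := by
    intro q j hj w
    have := dec_of _ (hinternal q) j w
    simp [pr, this, DFinsupp.single_eq_of_ne hj.symm]
  let E : ∀ q, Module.End k (N.V q) := fun q => (W0 i.1 q).subtype ∘ₗ (e q : W0 i.1 q →ₗ[k] W0 i.1 q) ∘ₗ pr q
  have E_same : ∀ q (w : W0 i.1 q), E q w.1 = (e q w : W0 i.1 q).1 := by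
    intro q w
    change ((e q (pr q w.1) : W0 i.1 q)).1 = _
    rw [pr_same]
  have E_ne : ∀ q (j : ι) (_ : j ≠ i), ∀ w ∈ W0 j.1 q, E q w = 0 := by
    intro q j hj w hw
    change ((e q (pr q w) : W0 i.1 q)).1 = _
    rw [pr_ne q j hj ⟨w, hw⟩]
    exact congrArg Subtype.val (map_zero (e q))
  have E_mem : ∀ q n, E q n ∈ W0 i.1 q := fun q n => (e q (pr q n) : W0 i.1 q).2
  have hE : NatIdem N E := by
    refine ⟨?_, ?_⟩
    · intro q q' h n
      refine LinearMap.congr_fun (f := (E q').comp (N.mv q q')) (g := (N.mv q q').comp (E q))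
        (ext_internal _ (htop' q) _ _ ?_) n
      intro j w hw
      have hw' : N.mv q q' w ∈ W0 j.1 q' := by
        rw [mv_eq _ h]; exact hst _ _ _ h _ hw
      change E q' (N.mv q q' w) = N.mv q q' (E q w)
      by_cases hj : j = i
      · subst hj
        have h1 := E_same q' ⟨_, hw'⟩
        have h2 := E_same q ⟨w, hw⟩
        have h3 := congrArg Subtype.val (he.1 q q' h (⟨w, hw⟩ : W0 j.1 q))
        have h4 := h3.trans (subMod_mv N _ (hst j.1) q q' h (e q (⟨w, hw⟩ : W0 j.1 q)))
        rw [show E q w = _ from h2]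
        refine Eq.trans ?_ h4
        refine h1.trans ?_
        congr 2
        exact Subtype.ext (subMod_mv N _ (hst j.1) q q' h ⟨w, hw⟩).symm
      · rw [E_ne q' j hj _ hw', E_ne q j hj w hw, map_zero]
    · intro q n
      have := E_same q ⟨_, E_mem q n⟩
      refine this.trans ?_
      exact congrArg Subtype.val (he.2 q (pr q n))
  have hEc : ∀ f ∈ S, ∀ q n, E q (f q n) = f q (E q n) := by
    intro f hf q n
    refine LinearMap.congr_fun (f := (E q).comp (f q)) (g := (f q).comp (E q))
      (ext_internal _ (htop' q) _ _ ?_) n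
    intro j w hw
    change E q (f q w) = f q (E q w)
    rw [(hW0 _ _ _).1 hw ⟨f, hf⟩, map_smul]
    by_cases hj : j = i
    · subst hj
      rw [(hW0 _ _ _).1 (E_mem q w) ⟨f, hf⟩]
    · rw [E_ne q j hj w hw, map_zero, smul_zero]
  have hES : E ∈ S := by
    refine hmax (y := insert E S) ⟨?_, ?_⟩ (Set.subset_insert _ _) (Set.mem_insert _ _)
    · rintro f (rfl | hf)
      · exact hE
      · exact hS.1 f hf
    · rintro f (rfl | hf) g (rfl | hg) q n
      · rfl
      · exact hEc g hg q n
      · exact (hEc f hf q n).symm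
      · exact hS.2 f hf g hg q n
  have hsc : ∀ q (w : W0 i.1 q), (e q w : W0 i.1 q) = i.1 ⟨E, hES⟩ • w := by
    intro q w
    apply Subtype.ext
    rw [← E_same]
    exact (hW0 _ _ _).1 w.2 ⟨E, hES⟩
  by_cases hc : i.1 ⟨E, hES⟩ = 0
  · left
    intro q n
    have h3 : e q n = i.1 ⟨E, hES⟩ • n := hsc q n
    rw [h3, hc, zero_smul]
  · right
    intro q n
    have h1 := he.2 q n
    have h2 : e q (e q n) = i.1 ⟨E, hES⟩ • e q n := hsc q (e q n)
    have h3 : e q n = i.1 ⟨E, hES⟩ • n := hsc q n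
    rw [h2, h3] at h1
    exact (h3.trans ((smul_right_injective _ hc) h1))

end Zorn

end PMod

open PMod in
/-- Theorem 1.4 (upper-triangular case): pointwise finite-dimensional middle exact
modules over the upper-triangular subposet of the plane decompose into restrictions of
block modules together with interval modules on points of the anti-diagonal. -/
theorem stmt4 {k : Type} [Field k] (N : PersistenceModule k ↥upperTbar)
    (hfd : ∀ p, FiniteDimensional k (N.V p)) (hme : MiddleExactSub upperTbar N) :
    ∃ (ι : Type) (I : ι → Set ↥upperTbar) (hI : ∀ i, IsConvex (I i)),
      (∀ i, (∃ J : Set (ℝ × ℝ), IsBlock J ∧ I i = {p : ↥upperTbar | (p : ℝ × ℝ) ∈ J}) ∨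
        (∃ p : ↥upperTbar, (p : ℝ × ℝ).1 + (p : ℝ × ℝ).2 = 0 ∧ I i = {p})) ∧
      Isomorphic N (directSum fun i => intervalModule k (I i) (hI i)) := by
  classical
  obtain ⟨ι, W, hW, hinternal0, hne, hidem⟩ := decomposition N hfd
  have hinternal : ∀ q, DirectSum.IsInternal fun i => W i q := fun q => by convert hinternal0 q
  have htop : ∀ q, ⨆ i : ι, W i q = ⊤ := fun q => (hinternal q).submodule_iSup_eq_top
  let M : ι → PersistenceModule k ↥upperTbar := fun i => subMod N (W i) (hW i)
  let pr : ∀ i q, N.V q →ₗ[k] W i q := fun i q =>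
    (DFinsupp.lapply i : (Π₀ j : ι, W j q) →ₗ[k] W i q) ∘ₗ (dec _ (hinternal q)).toLinearMap
  have pr_same : ∀ i q (w : W i q), pr i q w.1 = w := by
    intro i q w
    have := dec_of _ (hinternal q) i w
    simp [pr, this]
  have pr_nat : ∀ i q q' (h : q ≤ q') n, N.map h (pr i q n).1 = (pr i q' (N.map h n)).1 := by
    intro i q q' h n
    refine LinearMap.congr_fun (f := (N.map h).comp ((W i q).subtype.comp (pr i q)))
      (g := (W i q').subtype.comp ((pr i q').comp (N.map h)))
      (ext_internal _ (htop q) _ _ ?_) n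
    intro j w hw
    change N.map h (pr i q w).1 = (pr i q' (N.map h w)).1
    have h1 := dec_of _ (hinternal q) j ⟨w, hw⟩
    have h2 := dec_of _ (hinternal q') j ⟨_, hW j q q' h w hw⟩
    by_cases hj : j = i
    · subst hj
      have h3 := pr_same j q ⟨w, hw⟩
      have h4 := pr_same j q' ⟨_, hW j q q' h w hw⟩
      simp only at h3 h4
      rw [h3, h4]
    · simp [pr, h1, h2, DFinsupp.single_eq_of_ne (Ne.symm hj)]
  have key : ∀ i, ∃ J : Set (ℝ × ℝ), ∃ hJ : IsBlock J,
      Isomorphic (M i) (intervalModule k {p : ↥upperTbar | (p : ℝ × ℝ) ∈ J}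
        (hJ.isConvex.preimageSub upperTbar)) := by
    intro i
    obtain ⟨q, hq⟩ := hne i
    obtain ⟨n, hn, hn0⟩ := Submodule.exists_mem_ne_zero_of_ne_bot hq
    have hfd' : ∀ p, FiniteDimensional k ((M i).V p) := fun p => by
      have := hfd p
      exact inferInstanceAs (FiniteDimensional k (W i p))
    have hme' : MiddleExactSub upperTbar (M i) := by
      intro x x' y y' hx hy ha hb hc hd mb mc h
      obtain ⟨ma, h1, h2⟩ := hme x x' y y' hx hy ha hb hc hd (Subtype.val (p := (· ∈ W i _)) mb)
        (Subtype.val (p := (· ∈ W i _)) mc) (congrArg Subtype.val h)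
      refine ⟨pr i _ ma, Subtype.ext ?_, Subtype.ext ?_⟩
      · refine (pr_nat i _ _ _ ma).trans ?_
        rw [h1]
        exact congrArg Subtype.val (pr_same i _ mb)
      · refine (pr_nat i _ _ _ ma).trans ?_
        rw [h2]
        exact congrArg Subtype.val (pr_same i _ mc)
    obtain ⟨J, hJ, hs⟩ := hasBlock hfd' hme' q (⟨n, hn⟩ : W i q)
      (fun h => hn0 (congrArg Subtype.val h))
    exact ⟨J, hJ, hs.iso (fun e h1 h2 => hidem i e ⟨h1, h2⟩) _⟩
  choose J hJ g hg using key
  refine ⟨ι, fun i => {p : ↥upperTbar | (p : ℝ × ℝ) ∈ J i},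
    fun i => (hJ i).isConvex.preimageSub upperTbar, fun i => Or.inl ⟨J i, hJ i, rfl⟩, ?_⟩
  refine ⟨⟨fun q => (DFinsupp.mapRange.linearMap fun i => (g i).app q) ∘ₗ
    (dec _ (hinternal q)).toLinearMap, ?_⟩, ?_⟩
  · intro q q' h
    refine ext_internal _ (htop q) _ _ ?_
    intro j w hw
    have h1 := dec_of _ (hinternal q) j ⟨w, hw⟩
    have h2 := dec_of _ (hinternal q') j ⟨_, hW j q q' h w hw⟩
    have h3 := LinearMap.congr_fun ((g j).natural h) (⟨w, hw⟩ : W j q)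
    change DFinsupp.mapRange.linearMap (fun i => (intervalModule k {p : ↥upperTbar |
        (p : ℝ × ℝ) ∈ J i} ((hJ i).isConvex.preimageSub upperTbar)).map h)
        (DFinsupp.mapRange.linearMap (fun i => (g i).app q) (dec _ (hinternal q) w)) =
      DFinsupp.mapRange.linearMap (fun i => (g i).app q') (dec _ (hinternal q') (N.map h w))
    have e1 : DFinsupp.mapRange.linearMap (fun i => (g i).app q) (dec _ (hinternal q) w) =
        DFinsupp.single j ((g j).app q (⟨w, hw⟩ : W j q)) :=
      (congrArg (DFinsupp.mapRange.linearMap (fun i => (g i).app q)) h1).trans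
        (DFinsupp.mapRange_single (hf := fun i => map_zero ((g i).app q)))
    have e2 : DFinsupp.mapRange.linearMap (fun i => (g i).app q') (dec _ (hinternal q') (N.map h w)) =
        DFinsupp.single j ((g j).app q' (⟨_, hW j q q' h w hw⟩ : W j q')) :=
      (congrArg (DFinsupp.mapRange.linearMap (fun i => (g i).app q')) h2).trans
        (DFinsupp.mapRange_single (hf := fun i => map_zero ((g i).app q')))
    rw [e1, e2]
    refine (DFinsupp.mapRange_single (hf := fun i => map_zero _)).trans ?_
    exact congrArg _ h3
  · intro q
    have hb : Function.Bijective (DFinsupp.mapRange.linearMap fun i => (g i).app q) := by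
      constructor
      · exact (DFinsupp.mapRange_injective _ (fun i => map_zero _)).2 fun i => (hg i q).1
      · exact (DFinsupp.mapRange_surjective _ (fun i => map_zero _)).2 fun i => (hg i q).2
    exact hb.comp (dec _ (hinternal q)).bijective
end

section
/- Let k be a field, P a poset, and I ⊆ P a directed ideal (I is nonempty, closed under going down, and any two elements of I have a common upper bound in I). Then the constant module k_I : P → Vec_k is an injective persistence module: every monomorphism f : k_I → M of persistence modules over P splits, i.e., there exists g : M → k_I with g ∘ f = id. -/
open PMod in
/-- Lemma 2.1: the constant module on a directed ideal is injective. -/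
theorem stmt5 {k : Type} [Field k] {P : Type} [PartialOrder P] (I : Set P)
    (hne : I.Nonempty) (hid : IsIdeal I)
    (hdir : ∀ p ∈ I, ∀ q ∈ I, ∃ c ∈ I, p ≤ c ∧ q ≤ c)
    (M : PersistenceModule k P)
    (f : Hom (intervalModule k I hid.isConvex) M)
    (hf : ∀ x, Function.Injective (f.app x)) :
    ∃ g : Hom M (intervalModule k I hid.isConvex),
      ∀ x, (g.app x).comp (f.app x) = LinearMap.id := by
  classical
  obtain ⟨i₀, hi₀⟩ := hne
  have : Nonempty I := ⟨⟨i₀, hi₀⟩⟩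
  have : IsDirectedOrder I := ⟨fun a b => by
    obtain ⟨c, hc, h1, h2⟩ := hdir a a.2 b b.2
    exact ⟨⟨c, hc⟩, h1, h2⟩⟩
  let G : I → Type := fun i => M.V i
  let F : ∀ i j : I, i ≤ j → G i →ₗ[k] G j := fun i j h => M.map h
  have : DirectedSystem G (fun i j h => F i j h) :=
    { map_self := fun i x => by
        change M.map (le_refl (i : P)) x = x
        rw [M.map_refl]; rfl
      map_map := fun l j i hij hjl x => by
        change M.map (show (j : P) ≤ l from hjl) (M.map (show (i : P) ≤ j from hij) x) =
          M.map (show (i : P) ≤ l from le_trans hij hjl) x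
        rw [M.map_trans (show (i : P) ≤ j from hij) (show (j : P) ≤ l from hjl)]; rfl }
  let ofI := Module.DirectLimit.of k I G F
  let gen : ∀ i : I, M.V i := fun i => f.app i (kGen k i.2)
  have hgen : ∀ (i j : I) (h : i ≤ j), F i j h (gen i) = gen j := by
    intro i j h
    have := LinearMap.congr_fun (f.natural (show (i : P) ≤ j from h)) (kGen k i.2)
    refine this.trans ?_
    change f.app j (intervalMap k I (show (i : P) ≤ j from h) (kGen k i.2)) = f.app j (kGen k j.2)
    have hk : intervalMap k I (show (i : P) ≤ j from h) (kGen k i.2) = kGen k j.2 := by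
      apply Subtype.ext
      simp [intervalMap, kGen]
    exact congrArg (f.app j) hk
  have hgen0 : ∀ i : I, gen i ≠ 0 := by
    intro i h
    have h1 : (kGen k i.2 : kMod k I i) = 0 := hf i (h.trans (map_zero _).symm)
    have h2 := congrArg Subtype.val h1
    simp [kGen] at h2
  have hof : ∀ i j : I, ofI i (gen i) = ofI j (gen j) := by
    intro i j
    obtain ⟨c, hi, hj⟩ := exists_ge_ge i j
    have h1 := Module.DirectLimit.of_f (R := k) (f := F) (hij := hi) (x := gen i)
    have h2 := Module.DirectLimit.of_f (R := k) (f := F) (hij := hj) (x := gen j)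
    rw [hgen] at h1 h2
    exact h1.symm.trans h2
  have he : ofI ⟨i₀, hi₀⟩ (gen ⟨i₀, hi₀⟩) ≠ 0 := by
    intro h
    obtain ⟨j, hj, h0⟩ := Module.DirectLimit.of.zero_exact h
    rw [hgen] at h0
    exact hgen0 j h0
  obtain ⟨φ, hφ⟩ := Module.Projective.exists_dual_ne_zero k he
  let c := φ (ofI ⟨i₀, hi₀⟩ (gen ⟨i₀, hi₀⟩))
  let ψ : Module.DirectLimit G F →ₗ[k] k := c⁻¹ • φ
  have hψ : ∀ i : I, ψ (ofI i (gen i)) = 1 := by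
    intro i
    rw [hof i ⟨i₀, hi₀⟩]
    exact inv_mul_cancel₀ hφ
  let g : ∀ x, M.V x →ₗ[k] kMod k I x := fun x =>
    if hx : x ∈ I then
      LinearMap.codRestrict (kMod k I x) (ψ.comp (ofI ⟨x, hx⟩)) (by simp [kMod, hx])
    else 0
  have hg : ∀ x (hx : x ∈ I) (v : M.V x), ((g x v : kMod k I x) : k) = ψ (ofI ⟨x, hx⟩ v) := by
    intro x hx v
    simp only [g, dif_pos hx]
    rfl
  refine ⟨⟨g, ?_⟩, ?_⟩
  · intro x y h
    apply LinearMap.ext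
    intro v
    apply Subtype.ext
    change ((intervalMap k I h (g x v) : kMod k I y) : k) = (g y (M.map h v) : kMod k I y)
    by_cases hy : y ∈ I
    · have hx := hid x y h hy
      rw [hg y hy]
      simp only [intervalMap, LinearMap.coe_mk, AddHom.coe_mk, dif_pos hy]
      rw [hg x hx]
      exact congrArg ψ (Module.DirectLimit.of_f (R := k) (f := F) (i := ⟨x, hx⟩) (j := ⟨y, hy⟩)
        (hij := h) (x := v)).symm
    · rw [kMod_coe_eq_zero k hy, kMod_coe_eq_zero k hy]
  · intro x
    apply LinearMap.ext
    intro m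
    apply Subtype.ext
    change ((g x (f.app x m) : kMod k I x) : k) = (show kMod k I x from m).1
    by_cases hx : x ∈ I
    · have hm : m = (show kMod k I x from m).1 • (kGen k hx : kMod k I x) := by
        apply Subtype.ext
        simp [kGen]
      have key : f.app x m = (show kMod k I x from m).1 • gen ⟨x, hx⟩ :=
        (congrArg (f.app x) hm).trans (map_smul (f.app x) _ _)
      rw [hg x hx, key, map_smul, map_smul, hψ]
      simp
    · rw [kMod_coe_eq_zero k hx, kMod_coe_eq_zero k hx]
end

section
/- Let k be a field and P a codirected poset (for every p, q ∈ P there exists c ∈ P with c ≤ p and c ≤ q). Let M be a pointwise finite-dimensional persistence module over P with M_p ≠ 0 for all p ∈ P, such that the structure map M_p → M_q is injective for all p ≤ q. Then there exists a monomorphism k_P → M. If moreover P is also directed, then M has a direct summand isomorphic to k_P. -/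
namespace PMod

theorem map_map_apply {k : Type} [Field k] {P : Type} [Preorder P]
    (M : PersistenceModule k P) {x y z : P} (hxy : x ≤ y) (hyz : y ≤ z) (v : M.V x) :
    M.map hyz (M.map hxy v) = M.map (le_trans hxy hyz) v := by
  rw [M.map_trans hxy hyz]; rfl

/-- A compatible nowhere zero section. -/
theorem exists_section {k : Type} [Field k] {P : Type} [PartialOrder P]
    (hcodir : ∀ p q : P, ∃ c, c ≤ p ∧ c ≤ q)
    (M : PersistenceModule k P)
    (hfd : ∀ p, FiniteDimensional k (M.V p))
    (hne : ∀ p, ∃ v : M.V p, v ≠ 0)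
    (hinj : ∀ (p q : P) (h : p ≤ q), Function.Injective (M.map h)) :
    ∃ s : ∀ x, M.V x, (∀ x, s x ≠ 0) ∧ ∀ (x y : P) (h : x ≤ y), M.map h (s x) = s y := by
  rcases isEmpty_or_nonempty P with hP | hP
  · exact ⟨fun x => hP.elim x, fun x => hP.elim x, fun x => hP.elim x⟩
  obtain ⟨p, hp⟩ : ∃ p : P, ∀ q, Module.finrank k (M.V p) ≤ Module.finrank k (M.V q) := by
    let f : P → ℕ := fun p => Module.finrank k (M.V p)
    exact ⟨Function.argmin f, fun q => Function.argmin_le f q⟩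
  have hsurj : ∀ (c : P) (h : c ≤ p), Function.Surjective (M.map h) := by
    intro c h
    have heq : Module.finrank k (M.V c) = Module.finrank k (M.V p) :=
      le_antisymm (LinearMap.finrank_le_finrank_of_injective (hinj c p h)) (hp c)
    exact (LinearMap.injective_iff_surjective_of_finrank_eq_finrank heq).1 (hinj c p h)
  obtain ⟨v, hv⟩ := hne p
  choose c hcx hcp using fun x => hcodir x p
  choose w hw using fun x => hsurj (c x) (hcp x) v
  refine ⟨fun x => M.map (hcx x) (w x), ?_, ?_⟩
  · intro x h0
    have hw0 : w x = 0 := hinj _ _ (hcx x) (h0.trans (map_zero _).symm)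
    apply hv
    rw [← hw x, hw0, map_zero]
  · intro x y h
    obtain ⟨d, hdx, hdy⟩ := hcodir (c x) (c y)
    obtain ⟨u, hu⟩ := hsurj d (hdx.trans (hcp x)) v
    have h1 : M.map hdx u = w x := by
      apply hinj _ _ (hcp x)
      rw [map_map_apply, hu, hw]
    have h2 : M.map hdy u = w y := by
      apply hinj _ _ (hcp y)
      rw [map_map_apply, hu, hw]
    simp only [← h1, ← h2, map_map_apply]

/-- Over a directed poset a compatible nowhere zero section admits a retraction. -/
theorem exists_retraction {k : Type} [Field k] {P : Type} [PartialOrder P]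
    (hdir : ∀ p q : P, ∃ c, p ≤ c ∧ q ≤ c)
    (M : PersistenceModule k P)
    (s : ∀ x, M.V x) (hs : ∀ x, s x ≠ 0)
    (hss : ∀ (x y : P) (h : x ≤ y), M.map h (s x) = s y) :
    ∃ r : ∀ x, M.V x →ₗ[k] k, (∀ x, r x (s x) = 1) ∧
      ∀ (x y : P) (h : x ≤ y) (v : M.V x), r y (M.map h v) = r x v := by
  classical
  rcases isEmpty_or_nonempty P with hP | hP
  · exact ⟨fun x => hP.elim x, fun x => hP.elim x, fun x => hP.elim x⟩
  haveI : IsDirected P (· ≤ ·) := ⟨hdir⟩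
  let F : ∀ i j : P, i ≤ j → M.V i →ₗ[k] M.V j := fun i j h => M.map h
  haveI : DirectedSystem M.V (fun i j h => F i j h) :=
    { map_self := fun i x => by
        change M.map (le_refl i) x = x
        rw [M.map_refl]; rfl
      map_map := fun i j l hij hjl x => map_map_apply M _ _ _ }
  let ι : ∀ x, M.V x →ₗ[k] Module.DirectLimit M.V F := fun x => Module.DirectLimit.of k P M.V F x
  have hι : ∀ (x y : P) (h : x ≤ y) (v : M.V x), ι y (M.map h v) = ι x v :=
    fun x y h v => Module.DirectLimit.of_f
  obtain ⟨p⟩ := hP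
  have hne : ι p (s p) ≠ 0 := by
    intro h0
    obtain ⟨j, hj, h⟩ := Module.DirectLimit.of.zero_exact h0
    exact hs j ((hss p j hj).symm.trans h)
  obtain ⟨ψ, hψ⟩ : ∃ ψ : Module.Dual k (Module.DirectLimit M.V F), ψ (ι p (s p)) ≠ 0 := by
    by_contra! hcon
    exact hne ((Module.forall_dual_apply_eq_zero_iff k _).1 hcon)
  obtain ⟨φ, hφ⟩ : ∃ φ : Module.Dual k (Module.DirectLimit M.V F), φ (ι p (s p)) = 1 :=
    ⟨(ψ (ι p (s p)))⁻¹ • ψ, by simp [hψ]⟩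
  refine ⟨fun x => φ.comp (ι x), ?_, ?_⟩
  · intro x
    obtain ⟨c, hxc, hpc⟩ := hdir x p
    have : ι x (s x) = ι p (s p) := by
      rw [← hι x c hxc, ← hι p c hpc, hss, hss]
    simpa [this] using hφ
  · intro x y h v
    simp [hι]

/-- The kernel of a compatible family of functionals. -/
def kerModule {k : Type} [Field k] {P : Type} [PartialOrder P]
    (M : PersistenceModule k P) (r : ∀ x, M.V x →ₗ[k] k)
    (hr : ∀ (x y : P) (h : x ≤ y) (v : M.V x), r y (M.map h v) = r x v) :
    PersistenceModule k P where
  V x := LinearMap.ker (r x)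
  map {x y} h := (M.map h).restrict (fun v hv => by
    rw [LinearMap.mem_ker] at hv ⊢
    rw [hr, hv])
  map_refl x := by
    ext v
    simp [M.map_refl]
  map_trans {x y z} hxy hyz := by
    ext v
    simp [M.map_trans hxy hyz]

end PMod

open PMod in
/-- Lemma 2.2: over a codirected poset, a pointwise finite-dimensional module with
everywhere nonzero fibres and injective structure maps admits a monomorphism from the
constant module; if moreover the poset is directed, the constant module is a summand. -/
theorem stmt6 {k : Type} [Field k] {P : Type} [PartialOrder P]
    (hcodir : ∀ p q : P, ∃ c, c ≤ p ∧ c ≤ q)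
    (M : PersistenceModule k P)
    (hfd : ∀ p, FiniteDimensional k (M.V p))
    (hne : ∀ p, ∃ v : M.V p, v ≠ 0)
    (hinj : ∀ (p q : P) (h : p ≤ q), Function.Injective (M.map h)) :
    (∃ f : Hom (constModule k P) M, ∀ x, Function.Injective (f.app x)) ∧
    ((∀ p q : P, ∃ c, p ≤ c ∧ q ≤ c) →
      ∃ M'' : PersistenceModule k P,
        Isomorphic M (sum2 (constModule k P) M'')) := by
  obtain ⟨s, hs, hss⟩ := exists_section hcodir M hfd hne hinj
  refine ⟨⟨⟨fun x => LinearMap.toSpanSingleton k (M.V x) (s x), ?_⟩, ?_⟩, ?_⟩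
  · intro x y h
    refine LinearMap.ext fun (a : k) => ?_
    change M.map h (a • s x) = a • s y
    rw [map_smul, hss]
  · intro x a b hab
    exact smul_left_injective k (hs x) hab
  · intro hdir
    obtain ⟨r, hrs, hr⟩ := exists_retraction hdir M s hs hss
    have hmem : ∀ x (v : M.V x), v - r x v • s x ∈ LinearMap.ker (r x) := by
      intro x v
      simp [LinearMap.mem_ker, hrs]
    refine ⟨kerModule M r hr, ⟨fun x => (r x).prod
      ((LinearMap.id - (r x).smulRight (s x)).codRestrict (LinearMap.ker (r x)) (hmem x)), ?_⟩, ?_⟩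
    · intro x y h
      refine LinearMap.ext fun v => ?_
      refine Prod.ext ?_ (Subtype.ext ?_)
      · exact (hr x y h v).symm
      · change M.map h (v - r x v • s x) = M.map h v - r y (M.map h v) • s y
        rw [map_sub, map_smul, hss, hr]
    · intro x
      constructor
      · intro v w hvw
        have h1 : r x v = r x w := congrArg Prod.fst hvw
        have h2 : v - r x v • s x = w - r x w • s x :=
          congrArg Subtype.val (congrArg Prod.snd hvw)
        rw [h1] at h2
        exact sub_left_injective h2
      · rintro ⟨a, w⟩
        obtain ⟨w, hw⟩ := w
        rw [LinearMap.mem_ker] at hw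
        have hv : r x (w + (show k from a) • s x) = a := by
          rw [map_add, map_smul, hw, hrs]
          exact (zero_add _).trans (mul_one (M := k) _)
        refine ⟨w + (show k from a) • s x, Prod.ext hv (Subtype.ext ?_)⟩
        change w + (show k from a) • s x - r x (w + (show k from a) • s x) • s x = w
        rw [hv]
        exact add_sub_cancel_right _ _
end
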